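/- Fix a positive integer k. The sum of the k-th powers of all cyclic numbers ≤ x is asymptotically equivalent to x^(k+1) / ((k+1) · e^γ · log log log x) as x → ∞, where γ is the Euler–Mascheroni constant. -/

import Mathlib

open Filter Asymptotics Real

/-- A positive integer `n` is *cyclic* if `gcd(n, φ(n)) = 1`. -/
def IsCyclicNum (n : ℕ) : Prop := 0 < n ∧ Nat.gcd n (Nat.totient n) = 1

instance : DecidablePred IsCyclicNum := fun n =>
  decidable_of_iff (0 < n ∧ Nat.gcd n (Nat.totient n) = 1) Iff.rfl

/-- The `n`-th cyclic number, indexed from 1: `cyclicNum 1 = 1`, `cyclicNum 2 = 2`, .... -/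
noncomputable def cyclicNum (n : ℕ) : ℕ := Nat.nth IsCyclicNum (n - 1)

/-- The number of cyclic numbers less than or equal to the real number `x`. -/
noncomputable def cyclicCount (x : ℝ) : ℕ :=
  ((Finset.range (⌊x⌋₊ + 1)).filter IsCyclicNum).card

/-- The sum of the `k`-th powers of all cyclic numbers `≤ x`. -/
noncomputable def cyclicPowSum (k : ℕ) (x : ℝ) : ℝ :=
  ∑ n ∈ (Finset.range (⌊x⌋₊ + 1)).filter IsCyclicNum, (n : ℝ) ^ k

/-!
The argument is Erdős's. A positive integer `n` is cyclic exactly when it is squarefree and has no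
prime factors `p`, `q` with `q ≡ 1 (mod p)`. Fix a prime `p` and let `q` range over the primes
`q ≡ 1 (mod p)` up to `x`: the sum of `1 / q` is roughly `log log x / p`.

If `p` is a little smaller than `log log x`, this sum is large, and Turán's second moment method
shows that almost all multiples of `p` are divisible by some such `q`; hence cyclic numbers
essentially have no prime factor below `log log x`. If `p` is a little larger than `log log x`, the
proportion of `n` divisible by `p ^ 2` or by some `p * q` is so small that these obstructions remain
negligible when summed over `p`. So the cyclic numbers up to `x` are essentially the integers
without prime factors up to `log log x`, whose density is `e^{-γ} / log log log x` by Mertens' third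
theorem.

The lower bound for the sum of `1 / q` must be uniform in `p`. It comes from the Dirichlet series
`L(s, χ)` of the characters modulo `p`, bounded below polynomially in `p` near `s = 1`: complex
characters are handled by `|L(s, 1)³ L(s, χ)⁴ L(s, χ²)| ≥ 1`, quadratic ones by Monsky's argument
with Lambert series. For the upper bound, both `N!`, stripped of its factors `p`, and the
product of the primes `q ≡ 1 (mod p)` in `(N, p * N]` divide `∏ j ≤ N, (1 + p * j)`, which bounds
the latter product.

Mertens' third theorem is obtained from his first by a Tauberian comparison of the sum of
`-log (1 - 1 / p)` over `p ≤ z` with `log ζ(1 + δ)`, grouping the primes by the integer part of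
`log p`.
-/

namespace CyclicNumber

open Finset
open scoped Topology

/-! ### Euler factors and Mertens' first theorem -/

lemma le_neg_log_one_sub {u : ℝ} (hu : u < 1) : u ≤ -log (1 - u) := by
  linarith [log_le_sub_one_of_pos (sub_pos.mpr hu)]

lemma neg_log_one_sub_le {u : ℝ} (hu : u ≤ 1 / 2) : -log (1 - u) ≤ u + 2 * u ^ 2 := by
  have hinv : (1 - u)⁻¹ ≤ 1 + u + 2 * u ^ 2 := by
    rw [inv_le_iff_one_le_mul₀ (by linarith)]
    nlinarith [sq_nonneg u]
  linarith [one_sub_inv_le_log_of_pos (x := 1 - u) (by linarith)]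

lemma natCast_rpow_neg_le_inv {n : ℕ} (hn : 1 ≤ n) {s : ℝ} (hs : 1 ≤ s) :
    (n : ℝ) ^ (-s) ≤ (n : ℝ)⁻¹ := by
  rw [← rpow_neg_one]
  exact rpow_le_rpow_of_exponent_le (mod_cast hn) (by linarith)

lemma inv_le_half_of_prime {p : ℕ} (hp : p.Prime) : (p : ℝ)⁻¹ ≤ 1 / 2 := by
  rw [one_div]
  exact inv_anti₀ two_pos (mod_cast hp.two_le)

lemma prime_rpow_neg_le_half {p : ℕ} (hp : p.Prime) {s : ℝ} (hs : 1 ≤ s) :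
    (p : ℝ) ^ (-s) ≤ 1 / 2 :=
  (natCast_rpow_neg_le_inv hp.one_le hs).trans (inv_le_half_of_prime hp)

/-- The logarithm of the Euler factor of `ζ(s)` at `n`: it is `-log (1 - n⁻ˢ)` if `n` is prime and
`0` otherwise. -/
noncomputable def logEulerFactor (s : ℝ) (n : ℕ) : ℝ :=
  if n.Prime then -log (1 - (n : ℝ) ^ (-s)) else 0

section logEulerFactor

variable {s : ℝ} {n p : ℕ}

lemma logEulerFactor_of_prime (s : ℝ) (hp : p.Prime) :
    logEulerFactor s p = -log (1 - (p : ℝ) ^ (-s)) :=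
  if_pos hp

lemma logEulerFactor_of_not_prime (s : ℝ) (hn : ¬ n.Prime) : logEulerFactor s n = 0 :=
  if_neg hn

lemma logEulerFactor_one_of_prime (hp : p.Prime) : logEulerFactor 1 p = -log (1 - (p : ℝ)⁻¹) := by
  rw [logEulerFactor_of_prime 1 hp, rpow_neg_one]

lemma rpow_neg_le_logEulerFactor (hp : p.Prime) (hs : 1 ≤ s) :
    (p : ℝ) ^ (-s) ≤ logEulerFactor s p := by
  rw [logEulerFactor_of_prime s hp]
  exact le_neg_log_one_sub (by linarith [prime_rpow_neg_le_half hp hs])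

lemma logEulerFactor_le_add_sq (hp : p.Prime) (hs : 1 ≤ s) :
    logEulerFactor s p ≤ (p : ℝ) ^ (-s) + 2 * ((p : ℝ) ^ (-s)) ^ 2 := by
  rw [logEulerFactor_of_prime s hp]
  exact neg_log_one_sub_le (prime_rpow_neg_le_half hp hs)

lemma logEulerFactor_nonneg (hs : 1 ≤ s) (n : ℕ) : 0 ≤ logEulerFactor s n := by
  by_cases hn : n.Prime
  · exact (rpow_nonneg n.cast_nonneg _).trans (rpow_neg_le_logEulerFactor hn hs)
  · exact (logEulerFactor_of_not_prime s hn).ge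

lemma logEulerFactor_le_two_mul (hs : 1 ≤ s) (n : ℕ) :
    logEulerFactor s n ≤ 2 * (n : ℝ) ^ (-s) := by
  by_cases hn : n.Prime
  · nlinarith [logEulerFactor_le_add_sq hn hs, prime_rpow_neg_le_half hn hs,
      rpow_nonneg (n.cast_nonneg (α := ℝ)) (-s)]
  · rw [logEulerFactor_of_not_prime s hn]
    positivity

lemma summable_logEulerFactor (hs : 1 < s) : Summable (logEulerFactor s) :=
  .of_nonneg_of_le (logEulerFactor_nonneg hs.le) (logEulerFactor_le_two_mul hs.le)
    ((summable_nat_rpow.mpr (by linarith)).mul_left 2)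

lemma exp_tsum_logEulerFactor (hs : 1 < s) :
    exp (∑' n, logEulerFactor s n) = ∑' n : ℕ, 1 / (n : ℝ) ^ s := by
  have euler := riemannZeta_eulerProduct_exp_log (s := (s : ℂ)) (by simpa using hs)
  rw [zeta_eq_tsum_one_div_nat_cpow (by simpa using hs)] at euler
  have tsum_primes : ∑' n, logEulerFactor s n = ∑' p : Nat.Primes, logEulerFactor s p :=
    (tsum_subtype_eq_of_support_subset fun n hn ↦ by
      by_contra hprime
      exact hn (logEulerFactor_of_not_prime s hprime)).symm
  have factor (p : Nat.Primes) :
      -Complex.log (1 - (p : ℂ) ^ (-(s : ℂ))) = (logEulerFactor s p : ℂ) := by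
    have := prime_rpow_neg_le_half p.2 hs.le
    rw [logEulerFactor_of_prime s p.2, Complex.ofReal_neg, Complex.ofReal_log (by linarith)]
    push_cast [Complex.ofReal_cpow (Nat.cast_nonneg (p : ℕ))]
    rfl
  rw [tsum_congr factor, ← Complex.ofReal_tsum, ← tsum_primes] at euler
  have cast_term (n : ℕ) : 1 / (n : ℂ) ^ (s : ℂ) = ((1 / (n : ℝ) ^ s : ℝ) : ℂ) := by
    push_cast [Complex.ofReal_cpow n.cast_nonneg]
    rfl
  simp_rw [cast_term] at euler
  exact_mod_cast euler

end logEulerFactor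

lemma log_factorial_eq_sum_primesLE (n : ℕ) :
    log n.factorial = ∑ p ∈ n.primesLE, (padicValNat p n.factorial : ℝ) * log p := by
  rw [log_nat_eq_sum_factorization, Finsupp.sum_of_support_subset (s := n.primesLE)]
  · refine sum_congr rfl fun p hp ↦ ?_
    rw [Nat.factorization_def _ (Nat.prime_of_mem_primesLE hp)]
  · intro p hp
    rw [Nat.support_factorization, Nat.mem_primeFactors] at hp
    exact Nat.mem_primesLE.mpr ⟨hp.1.dvd_factorial.mp hp.2.1, hp.1⟩
  · simp

lemma div_le_padicValNat_factorial {p : ℕ} (hp : p.Prime) (n : ℕ) :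
    n / p ≤ padicValNat p n.factorial := by
  have := Fact.mk hp
  rw [padicValNat_factorial (b := Nat.log p n + 2) (by lia)]
  simpa using single_le_sum (f := fun i ↦ n / p ^ i) (s := Ico 1 (Nat.log p n + 2))
    (fun i _ ↦ Nat.zero_le _) (a := 1) (by simp)

lemma padicValNat_factorial_le_div_sub_one {p : ℕ} (hp : p.Prime) (n : ℕ) :
    (padicValNat p n.factorial : ℝ) ≤ n / ((p : ℝ) - 1) := by
  have := Fact.mk hp
  have hp1 : (1 : ℝ) < p := mod_cast hp.one_lt
  have legendre : (p - 1) * padicValNat p n.factorial ≤ n := by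
    rw [sub_one_mul_padicValNat_factorial]
    exact Nat.sub_le _ _
  rw [le_div_iff₀ (by linarith), mul_comm, ← Nat.cast_pred hp.pos]
  exact_mod_cast legendre

lemma sum_log_primesLE_le (n : ℕ) : ∑ p ∈ n.primesLE, log p ≤ log 4 * n := by
  rw [← Chebyshev.theta_eq_sum_primesLE_log]
  exact Chebyshev.theta_le_log4_mul_x n.cast_nonneg

lemma sum_log_div_le_log_add {n : ℕ} (hn : 1 ≤ n) :
    ∑ p ∈ n.primesLE, log p / p ≤ log n + log 4 := by
  have hn0 : (0 : ℝ) < n := mod_cast hn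
  have term_le (p : ℕ) (hp : p ∈ n.primesLE) :
      n * (log p / p) ≤ padicValNat p n.factorial * log p + log p := by
    have hp := Nat.prime_of_mem_primesLE hp
    have div_le : (n : ℝ) / p ≤ padicValNat p n.factorial + 1 := by
      have hfloor := (Nat.lt_floor_add_one ((n : ℝ) / p)).le
      rw [Nat.floor_div_eq_div] at hfloor
      have : ((n / p : ℕ) : ℝ) ≤ padicValNat p n.factorial :=
        mod_cast div_le_padicValNat_factorial hp n
      linarith
    calc n * (log p / p) = n / p * log p := by ring
      _ ≤ (padicValNat p n.factorial + 1) * log p := by gcongr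
      _ = _ := by ring
  refine le_of_mul_le_mul_left ?_ hn0
  calc n * ∑ p ∈ n.primesLE, log p / p
      ≤ log n.factorial + ∑ p ∈ n.primesLE, log p := by
        rw [mul_sum, log_factorial_eq_sum_primesLE, ← sum_add_distrib]
        exact sum_le_sum term_le
    _ ≤ n * log n + log 4 * n := by
        gcongr
        · rw [← log_pow]
          exact log_le_log (by positivity) (mod_cast n.factorial_le_pow)
        · exact sum_log_primesLE_le n
    _ = n * (log n + log 4) := by ring

lemma log_sub_one_le_sum_log_div {n : ℕ} (hn : 1 ≤ n) :
    log n - 1 ≤ ∑ p ∈ n.primesLE, log p / ((p : ℝ) - 1) := by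
  have hn0 : (0 : ℝ) < n := mod_cast hn
  have stirling : n * log n - n ≤ log n.factorial := by
    have := Stirling.le_log_factorial_stirling (n := n) (by lia)
    have : 0 ≤ log n := log_natCast_nonneg n
    have : 0 ≤ log (2 * π) := log_nonneg (by linarith [pi_gt_three])
    linarith
  refine le_of_mul_le_mul_left ?_ hn0
  calc n * (log n - 1) ≤ log n.factorial := by linarith
    _ ≤ ∑ p ∈ n.primesLE, n / ((p : ℝ) - 1) * log p := by
        rw [log_factorial_eq_sum_primesLE]
        gcongr with p hp
        exact padicValNat_factorial_le_div_sub_one (Nat.prime_of_mem_primesLE hp) n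
    _ = n * ∑ p ∈ n.primesLE, log p / ((p : ℝ) - 1) := by
        rw [mul_sum]
        exact sum_congr rfl fun p _ ↦ by ring

lemma summable_log_div_sq : Summable fun n : ℕ ↦ log n / (n : ℝ) ^ 2 := by
  refine .of_nonneg_of_le (fun n ↦ div_nonneg (log_natCast_nonneg n) (by positivity)) (fun n ↦ ?_)
    ((summable_nat_rpow.mpr (by norm_num : (-(3 / 2) : ℝ) < -1)).mul_left 2)
  rcases n.eq_zero_or_pos with rfl | hn
  · simp
  have hn0 : (0 : ℝ) < n := mod_cast hn
  calc log n / (n : ℝ) ^ 2 ≤ (n : ℝ) ^ (1 / 2 : ℝ) / (1 / 2) / (n : ℝ) ^ 2 := by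
        gcongr
        exact log_le_rpow_div hn0.le (by norm_num)
    _ = 2 * ((n : ℝ) ^ (1 / 2 : ℝ) / (n : ℝ) ^ (2 : ℝ)) := by rw [rpow_two]; ring
    _ = 2 * (n : ℝ) ^ (-(3 / 2) : ℝ) := by rw [← rpow_sub hn0]; norm_num

lemma sum_log_div_sub_one_le (n : ℕ) :
    ∑ p ∈ n.primesLE, log p / ((p : ℝ) - 1) ≤
      ∑ p ∈ n.primesLE, log p / p + 2 * ∑' m : ℕ, log m / (m : ℝ) ^ 2 := by
  have term_le (p : ℕ) (hp : p ∈ n.primesLE) :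
      log p / ((p : ℝ) - 1) ≤ log p / p + 2 * (log p / (p : ℝ) ^ 2) := by
    have hp2 : (2 : ℝ) ≤ p := mod_cast (Nat.prime_of_mem_primesLE hp).two_le
    have : 1 / ((p : ℝ) - 1) ≤ 1 / p + 2 * (1 / (p : ℝ) ^ 2) := by
      rw [div_le_iff₀ (by linarith)]
      field_simp
      nlinarith
    calc log p / ((p : ℝ) - 1) = log p * (1 / ((p : ℝ) - 1)) := by ring
      _ ≤ log p * (1 / p + 2 * (1 / (p : ℝ) ^ 2)) := by gcongr
      _ = _ := by ring
  refine (sum_le_sum term_le).trans ?_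
  rw [sum_add_distrib, ← mul_sum]
  gcongr
  exact summable_log_div_sq.sum_le_tsum _ fun i _ ↦
    div_nonneg (log_natCast_nonneg i) (by positivity)

lemma sum_Ioc_eq_sum_primesLE {f : ℕ → ℝ} (hf : ∀ n, ¬ n.Prime → f n = 0) (N : ℕ) :
    ∑ n ∈ Ioc 1 N, f n = ∑ p ∈ N.primesLE, f p := by
  rw [Nat.primesLE_eq_filter_Ioc_one, sum_filter]
  refine sum_congr rfl fun n _ ↦ ?_
  split_ifs with hn
  exacts [rfl, hf n hn]

lemma logEulerFactor_one_le {p : ℕ} (hp : p.Prime) : logEulerFactor 1 p ≤ 1 / ((p : ℝ) - 1) := by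
  have hp1 : (1 : ℝ) < p := mod_cast hp.one_lt
  have hlog := one_sub_inv_le_log_of_pos (sub_pos.mpr (inv_lt_one_of_one_lt₀ hp1))
  have hinv : (1 - (p : ℝ)⁻¹)⁻¹ = 1 + 1 / ((p : ℝ) - 1) := by
    have : (p : ℝ) - 1 ≠ 0 := by linarith
    field_simp
    ring
  rw [logEulerFactor_one_of_prime hp]
  linarith

/-- Mertens' first theorem, with the weights `-log (1 - p⁻¹)` in place of `p⁻¹`. -/
theorem exists_abs_sum_logEulerFactor_mul_log_sub_log_le :
    ∃ C : ℝ, ∀ N : ℕ, 1 ≤ N → |∑ n ∈ Ioc 1 N, logEulerFactor 1 n * log n - log N| ≤ C := by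
  set K := ∑' n : ℕ, log n / (n : ℝ) ^ 2
  refine ⟨1 + log 4 + 2 * K, fun N hN ↦ ?_⟩
  rw [sum_Ioc_eq_sum_primesLE fun n hn ↦ by rw [logEulerFactor_of_not_prime 1 hn, zero_mul]]
  have weight_ge : ∑ p ∈ N.primesLE, log p / p ≤
      ∑ p ∈ N.primesLE, logEulerFactor 1 p * log p := by
    refine sum_le_sum fun p hp ↦ ?_
    rw [div_eq_inv_mul, ← rpow_neg_one]
    gcongr
    exact rpow_neg_le_logEulerFactor (Nat.prime_of_mem_primesLE hp) le_rfl
  have weight_le : ∑ p ∈ N.primesLE, logEulerFactor 1 p * log p ≤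
      ∑ p ∈ N.primesLE, log p / ((p : ℝ) - 1) := by
    refine sum_le_sum fun p hp ↦ ?_
    rw [div_eq_mul_one_div, mul_comm]
    gcongr
    exact logEulerFactor_one_le (Nat.prime_of_mem_primesLE hp)
  have : 0 ≤ K := tsum_nonneg fun n ↦ div_nonneg (log_natCast_nonneg n) (by positivity)
  have hlog4 : 0 ≤ log 4 := log_nonneg (by norm_num)
  have upper := sum_log_div_le_log_add hN
  have lower := log_sub_one_le_sum_log_div hN
  have compare := sum_log_div_sub_one_le N
  rw [abs_le]
  constructor <;> linarith

/-! ### Mertens' third theorem -/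

/-- The sum of `f n` over the integers `n` with `m < log n ≤ m + 1`. -/
noncomputable def expBinSum (f : ℕ → ℝ) (m : ℕ) : ℝ :=
  ∑ n ∈ Ioc ⌊exp m⌋₊ ⌊exp (m + 1)⌋₊, f n

section expBinSum

variable {w : ℕ → ℝ}

lemma sum_range_expBinSum (f : ℕ → ℝ) (M : ℕ) :
    ∑ m ∈ range M, expBinSum f m = ∑ n ∈ Ioc 1 ⌊exp M⌋₊, f n := by
  induction M with
  | zero => simp
  | succ M ih =>
    have one_le : 1 ≤ ⌊exp M⌋₊ := Nat.le_floor (by simp)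
    have step_le : ⌊exp (M : ℝ)⌋₊ ≤ ⌊exp (M + 1 : ℝ)⌋₊ :=
      Nat.floor_mono (exp_le_exp.mpr (by linarith))
    rw [sum_range_succ, ih, expBinSum, sum_Ioc_consecutive _ one_le step_le, Nat.cast_succ]

lemma log_mem_Ioc_of_mem_expBin {m n : ℕ} (hn : n ∈ Ioc ⌊exp m⌋₊ ⌊exp (m + 1)⌋₊) :
    log n ∈ Set.Ioc (m : ℝ) (m + 1) := by
  rw [mem_Ioc, Nat.floor_lt (exp_pos _).le, Nat.le_floor_iff (exp_pos _).le] at hn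
  have hn0 : (0 : ℝ) < n := (exp_pos _).trans hn.1
  exact ⟨(lt_log_iff_exp_lt hn0).mpr hn.1, (log_le_iff_le_exp hn0).mpr hn.2⟩

lemma expBinSum_nonneg (hw : ∀ n, 0 ≤ w n) (m : ℕ) : 0 ≤ expBinSum w m :=
  sum_nonneg fun n _ ↦ hw n

lemma expBinSum_mul_log_le (hw : ∀ n, 0 ≤ w n) (m : ℕ) :
    expBinSum (fun n ↦ w n * log n) m ≤ (m + 1) * expBinSum w m := by
  rw [expBinSum, expBinSum, mul_sum]
  refine sum_le_sum fun n hn ↦ ?_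
  rw [mul_comm]
  exact mul_le_mul_of_nonneg_right (log_mem_Ioc_of_mem_expBin hn).2 (hw n)

lemma mul_expBinSum_le (hw : ∀ n, 0 ≤ w n) (m : ℕ) :
    m * expBinSum w m ≤ expBinSum (fun n ↦ w n * log n) m := by
  rw [expBinSum, expBinSum, mul_sum]
  refine sum_le_sum fun n hn ↦ ?_
  rw [mul_comm]
  exact mul_le_mul_of_nonneg_left (log_mem_Ioc_of_mem_expBin hn).1.le (hw n)

lemma abs_log_floor_exp_sub_le (m : ℕ) : |log ⌊exp m⌋₊ - m| ≤ 1 := by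
  have one_le : (1 : ℝ) ≤ ⌊exp m⌋₊ := mod_cast Nat.le_floor (by simp)
  have upper : log ⌊exp m⌋₊ ≤ m := by
    rw [log_le_iff_le_exp (by linarith)]
    exact Nat.floor_le (exp_pos _).le
  have lower : (m : ℝ) - 1 ≤ log ⌊exp m⌋₊ := by
    rw [le_log_iff_exp_le (by linarith), exp_sub, div_le_iff₀ (exp_pos 1)]
    nlinarith [Nat.lt_floor_add_one (exp m), add_one_le_exp (1 : ℝ)]
  rw [abs_le]
  constructor <;> linarith

/-- The partial sums of `w n * log n` are `log N + O(1)`: the conclusion of Mertens' first theorem,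
as a property of the weights `w`. -/
def LogWeightedSumBounded (w : ℕ → ℝ) : Prop :=
  ∃ C : ℝ, ∀ N : ℕ, 1 ≤ N → |∑ n ∈ Ioc 1 N, w n * log n - log N| ≤ C

lemma LogWeightedSumBounded.exists_abs_sum_expBinSum_sub_le (h : LogWeightedSumBounded w) :
    ∃ C : ℝ, ∀ M : ℕ, |∑ m ∈ range M, expBinSum (fun n ↦ w n * log n) m - M| ≤ C := by
  obtain ⟨C, hC⟩ := h
  refine ⟨C + 1, fun M ↦ ?_⟩
  rw [sum_range_expBinSum]
  exact (abs_sub_le _ (log ⌊exp M⌋₊) _).trans <| add_le_add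
    (hC _ (Nat.le_floor (by simp))) (abs_log_floor_exp_sub_le M)

lemma summable_expBinSum_sub_div (hw : ∀ n, 0 ≤ w n) {B : ℝ}
    (hB : ∀ m, expBinSum (fun n ↦ w n * log n) m ≤ B) :
    Summable fun m : ℕ ↦ expBinSum w m - expBinSum (fun n ↦ w n * log n) m / (m + 1) := by
  refine .of_norm_bounded_eventually_nat
    ((summable_one_div_nat_pow.mpr one_lt_two).mul_left B) ?_
  filter_upwards [eventually_ge_atTop 1] with m hm
  have hm0 : (0 : ℝ) < m := mod_cast hm
  set W := expBinSum w m
  set D := expBinSum (fun n ↦ w n * log n) m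
  have hW : 0 ≤ W := expBinSum_nonneg hw m
  have hDW : D / (m + 1) ≤ W := by
    rw [div_le_iff₀' (by positivity)]
    exact expBinSum_mul_log_le hw m
  have hWD : m * W ≤ D := mul_expBinSum_le hw m
  have hD : 0 ≤ D := le_trans (by positivity) hWD
  rw [norm_of_nonneg (sub_nonneg.mpr hDW)]
  calc W - D / (m + 1) ≤ D / m - D / (m + 1) := by
        gcongr
        rwa [le_div_iff₀' hm0]
    _ = D * (1 / (m * (m + 1))) := by field_simp; ring
    _ ≤ B * (1 / (m : ℝ) ^ 2) := by
        have hB0 : 0 ≤ B := hD.trans (hB m)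
        gcongr
        · exact hB m
        · nlinarith

-- Abel summation against `1 / (m + 1)`, which replaces `log n` up to a summable error.
lemma exists_tendsto_sum_expBinSum_sub (hw : ∀ n, 0 ≤ w n) (h : LogWeightedSumBounded w) :
    ∃ l : ℝ, Tendsto (fun M ↦ ∑ m ∈ range M, (expBinSum w m - 1 / ((m : ℝ) + 1)))
      atTop (𝓝 l) := by
  obtain ⟨C, hC⟩ := h.exists_abs_sum_expBinSum_sub_le
  set D := expBinSum fun n ↦ w n * log n with hD
  have hDle (m : ℕ) : D m ≤ 2 * C + 1 := by
    have h₀ := abs_le.mp (hC m)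
    have h₁ := abs_le.mp (hC (m + 1))
    rw [sum_range_succ] at h₁
    push_cast at h₁
    linarith [h₀.1, h₁.2]
  have cauchy : CauchySeq fun M ↦ ∑ m ∈ range M, (1 / ((m : ℝ) + 1)) • (D m - 1) := by
    refine Antitone.cauchySeq_series_mul_of_tendsto_zero_of_bounded (b := C)
      (fun a b hab ↦ by gcongr) tendsto_one_div_add_atTop_nhds_zero_nat fun M ↦ ?_
    simpa [sum_sub_distrib] using hC M
  obtain ⟨l, hl⟩ := cauchySeq_tendsto_of_complete cauchy
  refine ⟨_, (hl.add (summable_expBinSum_sub_div hw hDle).hasSum.tendsto_sum_nat).congr fun M ↦ ?_⟩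
  rw [← sum_add_distrib]
  refine sum_congr rfl fun m _ ↦ ?_
  simp only [smul_eq_mul, ← hD]
  ring

lemma exp_neg_mul_ceil_log_le {n : ℕ} (hn : 1 ≤ n) {δ : ℝ} (hδ : 0 ≤ δ) :
    exp (-δ * ⌈log n⌉₊) ≤ (n : ℝ) ^ (-δ) := by
  rw [rpow_def_of_pos (mod_cast hn)]
  exact exp_le_exp.mpr (by nlinarith [Nat.le_ceil (log n)])

lemma rpow_neg_mul_one_sub_le {n : ℕ} (hn : 1 ≤ n) {δ : ℝ} (hδ : 0 ≤ δ) :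
    (n : ℝ) ^ (-δ) * (1 - δ) ≤ exp (-δ * ⌈log n⌉₊) := by
  have ceil_le := (Nat.ceil_lt_add_one (log_natCast_nonneg n)).le
  calc (n : ℝ) ^ (-δ) * (1 - δ) ≤ (n : ℝ) ^ (-δ) * exp (-δ) := by
        gcongr
        exact one_sub_le_exp_neg δ
    _ = exp (log n * -δ + -δ) := by rw [rpow_def_of_pos (mod_cast hn), exp_add]
    _ ≤ exp (-δ * ⌈log n⌉₊) := exp_le_exp.mpr (by nlinarith)

lemma expBinSum_mul_pow (w : ℕ → ℝ) (δ : ℝ) (m : ℕ) :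
    expBinSum w m * exp (-δ) ^ (m + 1) = expBinSum (fun n ↦ w n * exp (-δ * ⌈log n⌉₊)) m := by
  rw [expBinSum, expBinSum, sum_mul]
  refine sum_congr rfl fun n hn ↦ ?_
  have hlog := log_mem_Ioc_of_mem_expBin hn
  have hceil : ⌈log n⌉₊ = m + 1 := by
    rw [Nat.ceil_eq_iff (by lia)]
    exact ⟨by simpa using hlog.1, by simpa using hlog.2⟩
  rw [hceil, ← exp_nat_mul, mul_comm (-δ)]

lemma summable_mul_exp_neg_mul_ceil_log (hw : ∀ n, 0 ≤ w n) (hw0 : w 0 = 0) {δ : ℝ} (hδ : 0 ≤ δ)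
    (hs : Summable fun n : ℕ ↦ w n * (n : ℝ) ^ (-δ)) :
    Summable fun n : ℕ ↦ w n * exp (-δ * ⌈log n⌉₊) := by
  refine hs.of_nonneg_of_le (fun n ↦ mul_nonneg (hw n) (exp_pos _).le) fun n ↦ ?_
  rcases n.eq_zero_or_pos with rfl | hn
  · simp [hw0]
  · exact mul_le_mul_of_nonneg_left (exp_neg_mul_ceil_log_le hn hδ) (hw n)

lemma tsum_mul_exp_neg_mul_ceil_log_mem_Icc (hw : ∀ n, 0 ≤ w n) (hw0 : w 0 = 0) {δ : ℝ}
    (hδ : 0 ≤ δ) (hs : Summable fun n : ℕ ↦ w n * (n : ℝ) ^ (-δ)) :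
    ∑' n : ℕ, w n * exp (-δ * ⌈log n⌉₊) ∈ Set.Icc
      ((∑' n : ℕ, w n * (n : ℝ) ^ (-δ)) * (1 - δ)) (∑' n : ℕ, w n * (n : ℝ) ^ (-δ)) := by
  have hs' := summable_mul_exp_neg_mul_ceil_log hw hw0 hδ hs
  constructor
  · rw [← tsum_mul_right]
    refine (hs.mul_right _).tsum_le_tsum (fun n ↦ ?_) hs'
    rcases n.eq_zero_or_pos with rfl | hn
    · simp [hw0]
    · rw [mul_assoc]
      exact mul_le_mul_of_nonneg_left (rpow_neg_mul_one_sub_le hn hδ) (hw n)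
  · refine hs'.tsum_le_tsum (fun n ↦ ?_) hs
    rcases n.eq_zero_or_pos with rfl | hn
    · simp [hw0]
    · exact mul_le_mul_of_nonneg_left (exp_neg_mul_ceil_log_le hn hδ) (hw n)

lemma tendsto_floor_exp_atTop : Tendsto (fun M : ℕ ↦ ⌊exp M⌋₊) atTop atTop :=
  tendsto_nat_floor_atTop.comp (tendsto_exp_atTop.comp tendsto_natCast_atTop_atTop)

lemma exp_neg_mul_tsum_expBinSum_sub (hw : ∀ n, 0 ≤ w n) (hw0 : w 0 = 0) (hw1 : w 1 = 0)
    (h : LogWeightedSumBounded w) {δ : ℝ} (hδ : 0 < δ)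
    (hs : Summable fun n : ℕ ↦ w n * (n : ℝ) ^ (-δ)) :
    exp (-δ) * ∑' m : ℕ, (expBinSum w m - 1 / ((m : ℝ) + 1)) * exp (-δ) ^ m =
      ∑' n : ℕ, w n * exp (-δ * ⌈log n⌉₊) + log (1 - exp (-δ)) := by
  have hx : ‖exp (-δ)‖ < 1 := by simpa using hδ
  obtain ⟨l, hl⟩ := exists_tendsto_sum_expBinSum_sub hw h
  have lhs := (summable_powerSeries_of_norm_lt_one hl.cauchySeq hx).hasSum.tendsto_sum_nat.const_mul
    (exp (-δ))
  have weights := (summable_mul_exp_neg_mul_ceil_log hw hw0 hδ.le hs).hasSum.tendsto_sum_nat.comp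
    ((tendsto_add_atTop_nat 1).comp tendsto_floor_exp_atTop)
  have logs := (hasSum_pow_div_log_of_abs_lt_one hx).tendsto_sum_nat
  refine (tendsto_nhds_unique lhs ((weights.sub logs).congr fun M ↦ ?_)).trans (by ring)
  have hM : 1 ≤ ⌊exp M⌋₊ := Nat.le_floor (by simp)
  have drop_zero_one : ∑ n ∈ range (⌊exp M⌋₊ + 1), w n * exp (-δ * ⌈log n⌉₊) =
      ∑ n ∈ Ioc 1 ⌊exp M⌋₊, w n * exp (-δ * ⌈log n⌉₊) := by
    rw [range_eq_Ico, ← sum_Ico_consecutive _ (Nat.zero_le 2) (by lia)]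
    have : Ico 2 (⌊exp M⌋₊ + 1) = Ioc 1 ⌊exp M⌋₊ := by
      ext n
      simp only [mem_Ico, mem_Ioc]
      lia
    simp [sum_range_succ, hw0, hw1, this]
  simp only [Function.comp]
  rw [drop_zero_one, ← sum_range_expBinSum, mul_sum, ← sum_sub_distrib]
  refine sum_congr rfl fun m _ ↦ ?_
  rw [← expBinSum_mul_pow]
  ring

lemma tendsto_exp_neg_nhdsGT_zero : Tendsto (fun δ : ℝ ↦ exp (-δ)) (𝓝[>] 0) (𝓝[<] 1) := by
  refine tendsto_nhdsWithin_of_tendsto_nhds_of_eventually_within _ ?_ ?_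
  · have : ContinuousAt (fun δ : ℝ ↦ exp (-δ)) 0 := by fun_prop
    simpa using this.tendsto.mono_left nhdsWithin_le_nhds
  · filter_upwards [self_mem_nhdsWithin] with δ (hδ : 0 < δ)
    simpa using hδ

lemma tendsto_log_one_sub_exp_neg_sub_log :
    Tendsto (fun δ : ℝ ↦ log (1 - exp (-δ)) - log δ) (𝓝[>] 0) (𝓝 0) := by
  have slope : Tendsto (fun δ : ℝ ↦ (1 - exp (-δ)) / δ) (𝓝[>] 0) (𝓝 1) := by
    have hderiv : HasDerivAt (fun δ : ℝ ↦ -exp (-δ)) 1 0 := by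
      simpa using (hasDerivAt_neg (0 : ℝ)).exp.fun_neg
    refine hderiv.tendsto_slope_zero_right.congr fun δ ↦ ?_
    simp only [zero_add, neg_zero, exp_zero, smul_eq_mul]
    ring
  have hlog := (continuousAt_log one_ne_zero).tendsto.comp slope
  rw [log_one] at hlog
  refine hlog.congr' ?_
  filter_upwards [self_mem_nhdsWithin] with δ (hδ : 0 < δ)
  have : exp (-δ) < 1 := by simpa using hδ
  exact log_div (by linarith) hδ.ne'

lemma tendsto_mul_nhdsGT_zero_of_add_log {S : ℝ → ℝ} {c : ℝ}
    (hS : Tendsto (fun δ ↦ S δ + log δ) (𝓝[>] 0) (𝓝 c)) :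
    Tendsto (fun δ ↦ δ * S δ) (𝓝[>] 0) (𝓝 0) := by
  have hid : Tendsto (fun δ : ℝ ↦ δ) (𝓝[>] 0) (𝓝 0) := nhdsWithin_le_nhds
  have hlog : Tendsto (fun δ : ℝ ↦ δ * log δ) (𝓝[>] 0) (𝓝 0) := by
    simpa using (continuous_mul_log.tendsto 0).mono_left nhdsWithin_le_nhds
  have h := (hid.mul hS).sub hlog
  rw [zero_mul, sub_zero] at h
  exact h.congr fun δ ↦ by ring

lemma tendsto_tsum_mul_exp_add_log (hw : ∀ n, 0 ≤ w n) (hw0 : w 0 = 0)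
    (hs : ∀ δ : ℝ, 0 < δ → Summable fun n : ℕ ↦ w n * (n : ℝ) ^ (-δ)) {c : ℝ}
    (hc : Tendsto (fun δ : ℝ ↦ ∑' n : ℕ, w n * (n : ℝ) ^ (-δ) + log δ) (𝓝[>] 0) (𝓝 c)) :
    Tendsto (fun δ ↦ ∑' n : ℕ, w n * exp (-δ * ⌈log n⌉₊) + log (1 - exp (-δ)))
      (𝓝[>] 0) (𝓝 c) := by
  set S : ℝ → ℝ := fun δ ↦ ∑' n : ℕ, w n * (n : ℝ) ^ (-δ)
  have upper := hc.add tendsto_log_one_sub_exp_neg_sub_log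
  have lower := upper.sub (tendsto_mul_nhdsGT_zero_of_add_log hc)
  rw [add_zero] at upper
  rw [add_zero, sub_zero] at lower
  refine tendsto_of_tendsto_of_tendsto_of_le_of_le' lower upper ?_ ?_ <;>
    filter_upwards [self_mem_nhdsWithin] with δ (hδ : 0 < δ)
  · linarith [(tsum_mul_exp_neg_mul_ceil_log_mem_Icc hw hw0 hδ.le (hs δ hδ)).1]
  · linarith [(tsum_mul_exp_neg_mul_ceil_log_mem_Icc hw hw0 hδ.le (hs δ hδ)).2]

-- The limit exists by partial summation; Abel's limit theorem identifies it.
lemma tendsto_sum_expBinSum_sub (hw : ∀ n, 0 ≤ w n) (hw0 : w 0 = 0) (hw1 : w 1 = 0)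
    (h : LogWeightedSumBounded w)
    (hs : ∀ δ : ℝ, 0 < δ → Summable fun n : ℕ ↦ w n * (n : ℝ) ^ (-δ)) {c : ℝ}
    (hc : Tendsto (fun δ : ℝ ↦ ∑' n : ℕ, w n * (n : ℝ) ^ (-δ) + log δ) (𝓝[>] 0) (𝓝 c)) :
    Tendsto (fun M ↦ ∑ m ∈ range M, (expBinSum w m - 1 / ((m : ℝ) + 1))) atTop (𝓝 c) := by
  obtain ⟨l, hl⟩ := exists_tendsto_sum_expBinSum_sub hw h
  have abel := (tendsto_exp_neg_nhdsGT_zero.mono_right nhdsWithin_le_nhds).mul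
    ((tendsto_tsum_powerSeries_nhdsWithin_lt hl).comp tendsto_exp_neg_nhdsGT_zero)
  rw [one_mul] at abel
  have hlc : l = c := by
    refine tendsto_nhds_unique (abel.congr' ?_) (tendsto_tsum_mul_exp_add_log hw hw0 hs hc)
    filter_upwards [self_mem_nhdsWithin] with δ (hδ : 0 < δ)
    exact exp_neg_mul_tsum_expBinSum_sub hw hw0 hw1 h hδ (hs δ hδ)
  rwa [← hlc]

lemma tendsto_sub_log_log_of_tendsto_exp_natCast {G : ℝ → ℝ} (hG : Monotone G) {l : ℝ}
    (h : Tendsto (fun M : ℕ ↦ G (exp M) - log M) atTop (𝓝 l)) :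
    Tendsto (fun x ↦ G x - log (log x)) atTop (𝓝 l) := by
  have hfloor : Tendsto (fun x : ℝ ↦ ⌊log x⌋₊) atTop atTop :=
    tendsto_nat_floor_atTop.comp tendsto_log_atTop
  have lower := (h.sub tendsto_log_nat_add_one_sub_log).comp hfloor
  have upper := ((h.comp (tendsto_add_atTop_nat 1)).add tendsto_log_nat_add_one_sub_log).comp hfloor
  rw [sub_zero] at lower
  rw [add_zero] at upper
  refine tendsto_of_tendsto_of_tendsto_of_le_of_le' lower upper ?_ ?_
  all_goals
    filter_upwards [eventually_ge_atTop (exp 1)] with x hx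
    have hx0 : 0 < x := (exp_pos 1).trans_le hx
    have one_le_log : 1 ≤ log x := (le_log_iff_exp_le hx0).mpr hx
    have one_le_floor : (1 : ℝ) ≤ ⌊log x⌋₊ := mod_cast Nat.le_floor (by simpa using one_le_log)
    have floor_le : (⌊log x⌋₊ : ℝ) ≤ log x := Nat.floor_le (by linarith)
    have le_floor : log x ≤ ⌊log x⌋₊ + 1 := (Nat.lt_floor_add_one _).le
    simp only [Function.comp]
    push_cast
  · have hGx := hG ((le_log_iff_exp_le hx0).mp floor_le)
    have hlog := log_le_log (by linarith) le_floor
    linarith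
  · have hGx := hG ((log_le_iff_le_exp hx0).mp le_floor)
    have hlog := log_le_log (by linarith) floor_le
    linarith

theorem tendsto_sum_sub_log_log (hw : ∀ n, 0 ≤ w n) (hw0 : w 0 = 0) (hw1 : w 1 = 0)
    (h : LogWeightedSumBounded w)
    (hs : ∀ δ : ℝ, 0 < δ → Summable fun n : ℕ ↦ w n * (n : ℝ) ^ (-δ)) {c : ℝ}
    (hc : Tendsto (fun δ : ℝ ↦ ∑' n : ℕ, w n * (n : ℝ) ^ (-δ) + log δ) (𝓝[>] 0) (𝓝 c)) :
    Tendsto (fun x : ℝ ↦ ∑ n ∈ Ioc 1 ⌊x⌋₊, w n - log (log x)) atTop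
      (𝓝 (c + eulerMascheroniConstant)) := by
  refine tendsto_sub_log_log_of_tendsto_exp_natCast (G := fun x ↦ ∑ n ∈ Ioc 1 ⌊x⌋₊, w n) ?_ ?_
  · intro x y hxy
    exact sum_le_sum_of_subset_of_nonneg (Ioc_subset_Ioc_right (Nat.floor_mono hxy))
      fun n _ _ ↦ hw n
  · refine ((tendsto_sum_expBinSum_sub hw hw0 hw1 h hs hc).add tendsto_harmonic_sub_log).congr
      fun M ↦ ?_
    simp only [← sum_range_expBinSum, sum_sub_distrib, harmonic]
    push_cast
    simp only [one_div]
    ring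

end expBinSum

lemma tendsto_mul_tsum_one_div_rpow :
    Tendsto (fun δ : ℝ ↦ δ * ∑' n : ℕ, 1 / (n : ℝ) ^ (1 + δ)) (𝓝[>] 0) (𝓝 1) := by
  have hshift : Tendsto (fun δ : ℝ ↦ 1 + δ) (𝓝[>] 0) (𝓝[>] 1) := by
    refine tendsto_nhdsWithin_of_tendsto_nhds_of_eventually_within _ ?_ ?_
    · have : ContinuousAt (fun δ : ℝ ↦ 1 + δ) 0 := by fun_prop
      simpa using this.tendsto.mono_left nhdsWithin_le_nhds
    · filter_upwards [self_mem_nhdsWithin] with δ (hδ : 0 < δ)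
      simpa using hδ
  exact (tendsto_sub_mul_tsum_nat_rpow.comp hshift).congr fun δ ↦ by simp

lemma tendsto_tsum_logEulerFactor_add_log :
    Tendsto (fun δ : ℝ ↦ ∑' n, logEulerFactor (1 + δ) n + log δ) (𝓝[>] 0) (𝓝 0) := by
  have hlog := (continuousAt_log one_ne_zero).tendsto.comp tendsto_mul_tsum_one_div_rpow
  rw [log_one] at hlog
  refine hlog.congr' ?_
  filter_upwards [self_mem_nhdsWithin] with δ (hδ : 0 < δ)
  simp only [Function.comp]
  rw [← exp_tsum_logEulerFactor (by linarith), log_mul hδ.ne' (exp_pos _).ne', log_exp, add_comm]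

lemma natCast_rpow_neg_one_add (n : ℕ) (δ : ℝ) (hδ : 0 < δ) :
    (n : ℝ) ^ (-(1 + δ)) = (n : ℝ)⁻¹ * (n : ℝ) ^ (-δ) := by
  rw [neg_add, rpow_add' n.cast_nonneg (by linarith), rpow_neg_one]

lemma summable_logEulerFactor_one_mul_rpow {δ : ℝ} (hδ : 0 < δ) :
    Summable fun n : ℕ ↦ logEulerFactor 1 n * (n : ℝ) ^ (-δ) := by
  refine .of_nonneg_of_le (fun n ↦ mul_nonneg (logEulerFactor_nonneg le_rfl n) (by positivity))
    (fun n ↦ ?_) ((summable_nat_rpow.mpr (by linarith : -(1 + δ) < -1)).mul_left 2)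
  rw [natCast_rpow_neg_one_add n δ hδ, ← mul_assoc, ← rpow_neg_one]
  gcongr
  exact logEulerFactor_le_two_mul le_rfl n

lemma abs_logEulerFactor_one_mul_rpow_sub_le {δ : ℝ} (hδ : 0 < δ) (n : ℕ) :
    |logEulerFactor 1 n * (n : ℝ) ^ (-δ) - logEulerFactor (1 + δ) n| ≤ 2 * (1 / (n : ℝ) ^ 2) := by
  by_cases hn : n.Prime
  · have hu : (n : ℝ) ^ (-(1 + δ)) = (n : ℝ)⁻¹ * (n : ℝ) ^ (-δ) := natCast_rpow_neg_one_add n δ hδ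
    have hδ1 : (n : ℝ) ^ (-δ) ≤ 1 :=
      rpow_le_one_of_one_le_of_nonpos (mod_cast hn.one_le) (by linarith)
    have hδ0 : 0 ≤ (n : ℝ) ^ (-δ) := by positivity
    have hinv : 0 ≤ (n : ℝ)⁻¹ := by positivity
    have hsq : 1 / (n : ℝ) ^ 2 = (n : ℝ)⁻¹ ^ 2 := by rw [one_div, inv_pow]
    have lower₁ := rpow_neg_le_logEulerFactor hn le_rfl
    have upper₁ := logEulerFactor_le_add_sq hn le_rfl
    have lower := rpow_neg_le_logEulerFactor hn (s := 1 + δ) (by linarith)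
    have upper := logEulerFactor_le_add_sq hn (s := 1 + δ) (by linarith)
    rw [rpow_neg_one] at lower₁ upper₁
    rw [hu] at lower upper
    have sq_le : ((n : ℝ)⁻¹ * (n : ℝ) ^ (-δ)) ^ 2 ≤ (n : ℝ)⁻¹ ^ 2 := by
      gcongr
      exact mul_le_of_le_one_right hinv hδ1
    rw [hsq, abs_le]
    constructor <;> nlinarith [sq_nonneg ((n : ℝ)⁻¹)]
  · simp [logEulerFactor_of_not_prime _ hn]

lemma tendsto_logEulerFactor_one_mul_rpow_sub (n : ℕ) :
    Tendsto (fun δ ↦ logEulerFactor 1 n * (n : ℝ) ^ (-δ) - logEulerFactor (1 + δ) n)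
      (𝓝[>] 0) (𝓝 0) := by
  by_cases hn : n.Prime
  · have hn0 : (n : ℝ) ≠ 0 := mod_cast hn.ne_zero
    have hne : 1 - (n : ℝ) ^ (-(1 + 0) : ℝ) ≠ 0 := by
      rw [add_zero]
      linarith [prime_rpow_neg_le_half hn le_rfl]
    have hcont : ContinuousAt
        (fun δ ↦ logEulerFactor 1 n * (n : ℝ) ^ (-δ) - logEulerFactor (1 + δ) n) 0 := by
      simp only [logEulerFactor_of_prime _ hn]
      fun_prop (disch := first | assumption | exact Or.inl hn0)
    simpa using hcont.tendsto.mono_left nhdsWithin_le_nhds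
  · simp [logEulerFactor_of_not_prime _ hn]

lemma tendsto_tsum_logEulerFactor_one_mul_rpow_add_log :
    Tendsto (fun δ ↦ ∑' n : ℕ, logEulerFactor 1 n * (n : ℝ) ^ (-δ) + log δ) (𝓝[>] 0) (𝓝 0) := by
  have difference : Tendsto
      (fun δ ↦ ∑' n : ℕ, (logEulerFactor 1 n * (n : ℝ) ^ (-δ) - logEulerFactor (1 + δ) n))
      (𝓝[>] 0) (𝓝 (∑' _ : ℕ, 0)) := by
    refine tendsto_tsum_of_dominated_convergence
      ((summable_one_div_nat_pow.mpr one_lt_two).mul_left 2)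
      tendsto_logEulerFactor_one_mul_rpow_sub ?_
    filter_upwards [self_mem_nhdsWithin] with δ hδ n
    exact abs_logEulerFactor_one_mul_rpow_sub_le hδ n
  have h := difference.add tendsto_tsum_logEulerFactor_add_log
  rw [tsum_zero, add_zero] at h
  refine h.congr' ?_
  filter_upwards [self_mem_nhdsWithin] with δ (hδ : 0 < δ)
  rw [(summable_logEulerFactor_one_mul_rpow hδ).tsum_sub (summable_logEulerFactor (by linarith))]
  ring

/-- The product `∏ p ≤ z, (1 - 1/p)`, which is the density of the integers without prime factors
`p ≤ z`. -/
noncomputable def mertensProduct (z : ℝ) : ℝ :=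
  ∏ p ∈ ⌊z⌋₊.primesLE, (1 - (p : ℝ)⁻¹)

lemma mertensProduct_eq_exp (z : ℝ) :
    mertensProduct z = exp (-∑ n ∈ Ioc 1 ⌊z⌋₊, logEulerFactor 1 n) := by
  rw [sum_Ioc_eq_sum_primesLE fun n ↦ logEulerFactor_of_not_prime 1, ← sum_neg_distrib, exp_sum]
  refine prod_congr rfl fun p hp ↦ ?_
  have hprime := Nat.prime_of_mem_primesLE hp
  rw [logEulerFactor_one_of_prime hprime, neg_neg,
    exp_log (by linarith [inv_le_half_of_prime hprime])]

/-- Mertens' third theorem. -/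
theorem tendsto_mertensProduct_mul_log :
    Tendsto (fun z ↦ mertensProduct z * log z) atTop (𝓝 (exp (-eulerMascheroniConstant))) := by
  have hsum := tendsto_sum_sub_log_log (logEulerFactor_nonneg le_rfl)
    (logEulerFactor_of_not_prime 1 Nat.not_prime_zero)
    (logEulerFactor_of_not_prime 1 Nat.not_prime_one)
    exists_abs_sum_logEulerFactor_mul_log_sub_log_le
    (fun _ ↦ summable_logEulerFactor_one_mul_rpow) tendsto_tsum_logEulerFactor_one_mul_rpow_add_log
  rw [zero_add] at hsum
  refine ((continuous_exp.tendsto _).comp hsum.neg).congr' ?_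
  filter_upwards [eventually_gt_atTop 1] with z hz
  simp only [Function.comp]
  rw [neg_sub, sub_eq_neg_add, exp_add, exp_log (log_pos hz), mertensProduct_eq_exp]

/-! ### Reciprocals of primes congruent to one: upper bound -/

lemma dvd_prod_one_add_mul_of_dvd_factorial {r N M : ℕ} (hM : M ∣ N.factorial)
    (hrM : r.Coprime M) : M ∣ ∏ j ∈ range N, (1 + r * (j + 1)) := by
  have hM0 : M ≠ 0 := ne_zero_of_dvd_ne_zero N.factorial_ne_zero hM
  obtain ⟨s, hs⟩ : ∃ s, r * s ≡ 1 [MOD M] := by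
    obtain ⟨s, -, hs⟩ := Nat.exists_mul_mod_eq_of_coprime 1 hrM hM0
    exact ⟨s, hs⟩
  have hsM : M.Coprime (s ^ N) := by
    have : (r * s).Coprime M := by rw [Nat.Coprime, hs.gcd_eq, Nat.gcd_one_left]
    exact (this.coprime_mul_left).symm.pow_right N
  -- Multiplying each factor by the inverse `s` of `r` yields `N` consecutive integers.
  have consecutive : s ^ N * ∏ j ∈ range N, (1 + r * (j + 1)) ≡ (s + 1).ascFactorial N [MOD M] := by
    rw [Nat.ascFactorial_eq_prod_range, ← card_range N, ← prod_const, card_range,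
      ← prod_mul_distrib]
    refine Nat.ModEq.prod fun j _ ↦ ?_
    calc s * (1 + r * (j + 1)) = s + r * s * (j + 1) := by ring
      _ ≡ s + 1 * (j + 1) [MOD M] := (hs.mul_right _).add_left _
      _ = s + 1 + j := by ring
  have : M ∣ (s + 1).ascFactorial N := hM.trans (Nat.factorial_dvd_ascFactorial _ _)
  exact hsM.dvd_of_dvd_mul_left ((consecutive.dvd_iff dvd_rfl).mpr this)

lemma exists_eq_one_add_mul_of_modEq_one {r q : ℕ} (hq : 1 < q) (h : q ≡ 1 [MOD r]) :
    ∃ t, q = 1 + r * (t + 1) := by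
  obtain ⟨t, ht⟩ := (Nat.modEq_iff_dvd' hq.le).mp h.symm
  obtain _ | t := t
  · lia
  · exact ⟨t, by lia⟩

lemma prod_range_one_add_mul_le (r N : ℕ) :
    ∏ j ∈ range N, (1 + r * (j + 1)) ≤ (r + 1) ^ N * N.factorial := by
  rw [← prod_range_add_one_eq_factorial, ← card_range N, ← prod_const, card_range,
    ← prod_mul_distrib]
  exact prod_le_prod' fun j _ ↦ by nlinarith

lemma factorization_factorial_le_self {r : ℕ} (hr : r.Prime) (N : ℕ) :
    N.factorial.factorization r ≤ N := by
  have hr2 : (2 : ℝ) ≤ r := mod_cast hr.two_le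
  have : (N : ℝ) / (r - 1) ≤ N := div_le_self (by positivity) (by linarith)
  rw [Nat.factorization_def _ hr]
  exact_mod_cast (padicValNat_factorial_le_div_sub_one hr N).trans this

section primesModEqOne

variable {r N : ℕ} {Q : Finset ℕ}

lemma prod_primes_dvd_prod_one_add_mul (hr : r ≠ 0) (hprime : ∀ q ∈ Q, q.Prime)
    (hmod : ∀ q ∈ Q, q ≡ 1 [MOD r]) (hle : ∀ q ∈ Q, q ≤ r * N) :
    ∏ q ∈ Q, q ∣ ∏ j ∈ range N, (1 + r * (j + 1)) := by
  refine prod_primes_dvd _ (fun q hq ↦ (hprime q hq).prime) fun q hq ↦ ?_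
  obtain ⟨t, rfl⟩ := exists_eq_one_add_mul_of_modEq_one (hprime q hq).one_lt (hmod q hq)
  have : t + 1 ≤ N := Nat.le_of_mul_le_mul_left (by linarith [hle _ hq]) (Nat.pos_of_ne_zero hr)
  exact dvd_prod_of_mem (fun j ↦ 1 + r * (j + 1)) (mem_range.mpr this)

-- The part of `N!` prime to `r` and the product of the `q` are coprime divisors of
-- `∏ j ≤ N, (1 + r * j)`.
lemma prod_primes_modEq_one_le (hr : r.Prime) (hprime : ∀ q ∈ Q, q.Prime)
    (hmod : ∀ q ∈ Q, q ≡ 1 [MOD r]) (hlt : ∀ q ∈ Q, N < q) (hle : ∀ q ∈ Q, q ≤ r * N) :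
    ∏ q ∈ Q, q ≤ (r + 1) ^ N * r ^ N := by
  have hN := N.factorial_ne_zero
  set v := N.factorial.factorization r
  set M := N.factorial / r ^ v
  have hvM : r ^ v * M = N.factorial := Nat.ordProj_mul_ordCompl_eq_self _ _
  have hM : M ∣ N.factorial := Nat.ordCompl_dvd _ _
  have coprime : (∏ q ∈ Q, q).Coprime M := by
    refine Nat.Coprime.coprime_dvd_right hM (Nat.Coprime.prod_left fun q hq ↦ ?_)
    rw [(hprime q hq).coprime_iff_not_dvd, (hprime q hq).dvd_factorial, not_le]
    exact hlt q hq
  have dvd := coprime.mul_dvd_of_dvd_of_dvd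
    (prod_primes_dvd_prod_one_add_mul hr.ne_zero hprime hmod hle)
    (dvd_prod_one_add_mul_of_dvd_factorial hM (Nat.coprime_ordCompl hr hN))
  refine Nat.le_of_mul_le_mul_right ?_ (Nat.ordCompl_pos r hN)
  calc (∏ q ∈ Q, q) * M ≤ ∏ j ∈ range N, (1 + r * (j + 1)) :=
        Nat.le_of_dvd (prod_pos fun j _ ↦ by positivity) dvd
    _ ≤ (r + 1) ^ N * N.factorial := prod_range_one_add_mul_le r N
    _ = (r + 1) ^ N * r ^ v * M := by rw [mul_assoc, hvM]
    _ ≤ (r + 1) ^ N * r ^ N * M := by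
      gcongr
      · exact hr.one_le
      · exact factorization_factorial_le_self hr N

lemma sum_log_primes_modEq_one_le (hr : r.Prime) (hprime : ∀ q ∈ Q, q.Prime)
    (hmod : ∀ q ∈ Q, q ≡ 1 [MOD r]) (hlt : ∀ q ∈ Q, N < q) (hle : ∀ q ∈ Q, q ≤ r * N) :
    ∑ q ∈ Q, log q ≤ 3 * N * log r := by
  have hr2 : (2 : ℝ) ≤ r := mod_cast hr.two_le
  have hpos (q : ℕ) (hq : q ∈ Q) : 0 < (q : ℝ) := mod_cast (hprime q hq).pos
  have prod_le : ∏ q ∈ Q, (q : ℝ) ≤ (r + 1) ^ N * r ^ N := by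
    have h := (Nat.cast_le (α := ℝ)).mpr (prod_primes_modEq_one_le hr hprime hmod hlt hle)
    push_cast at h
    exact h
  have log_succ_le : log (r + 1) ≤ 2 * log r := by
    rw [← Nat.cast_ofNat, ← log_pow]
    exact log_le_log (by linarith) (by nlinarith)
  calc ∑ q ∈ Q, log q = log (∏ q ∈ Q, (q : ℝ)) := (log_prod fun q hq ↦ (hpos q hq).ne').symm
    _ ≤ log ((r + 1) ^ N * r ^ N) := log_le_log (prod_pos hpos) prod_le
    _ = N * log (r + 1) + N * log r := by
      rw [log_mul (by positivity) (by positivity), log_pow, log_pow]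
    _ ≤ N * (2 * log r) + N * log r := by gcongr
    _ = 3 * N * log r := by ring

end primesModEqOne

/-- The primes `q ≤ n` with `q ≡ 1 (mod r)`. -/
def primesModEqOne (r n : ℕ) : Finset ℕ :=
  n.primesLE.filter (· ≡ 1 [MOD r])

/-- The sum of `1 / q` over the primes `q ≤ n` with `q ≡ 1 (mod r)`. -/
noncomputable def recipSumModEqOne (r n : ℕ) : ℝ :=
  ∑ q ∈ primesModEqOne r n, (q : ℝ)⁻¹

lemma mem_primesModEqOne {r n q : ℕ} :
    q ∈ primesModEqOne r n ↔ (q ≤ n ∧ q.Prime) ∧ q ≡ 1 [MOD r] := by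
  rw [primesModEqOne, mem_filter, Nat.mem_primesLE]

lemma primesModEqOne_mono (r : ℕ) : Monotone (primesModEqOne r) := fun _ _ hmn ↦ by
  grind [mem_primesModEqOne]

lemma recipSumModEqOne_mono (r : ℕ) : Monotone (recipSumModEqOne r) := fun _ _ hmn ↦
  sum_le_sum_of_subset_of_nonneg (primesModEqOne_mono r hmn) fun _ _ _ ↦ by positivity

lemma sum_log_dyadic_primesModEqOne_le {r Y : ℕ} (hr : r.Prime) (hY : r ≤ Y) :
    ∑ q ∈ primesModEqOne r (2 * Y) \ primesModEqOne r Y, log q ≤ 9 * log r * Y / r := by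
  have : (0 : ℝ) < r := mod_cast hr.pos
  have hr2 := hr.two_le
  set N := (2 * Y + r - 1) / r
  have le_mul : 2 * Y ≤ r * N := by
    have := Nat.lt_mul_div_succ (2 * Y + r - 1) hr.pos
    rw [mul_add, mul_one] at this
    change _ < r * N + r at this
    lia
  have hNY : N ≤ Y := by
    have : 2 * Y ≤ r * Y := by gcongr
    refine Nat.lt_succ_iff.mp (Nat.div_lt_of_lt_mul ?_)
    rw [Nat.mul_succ]
    lia
  have mul_le : (N : ℝ) * r ≤ 3 * Y := by
    have : N * r ≤ 2 * Y + r - 1 := Nat.div_mul_le_self _ _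
    exact_mod_cast (by lia : N * r ≤ 3 * Y)
  have mem {q : ℕ} : q ∈ primesModEqOne r (2 * Y) \ primesModEqOne r Y →
      q.Prime ∧ q ≡ 1 [MOD r] ∧ Y < q ∧ q ≤ 2 * Y := by
    grind [mem_primesModEqOne]
  calc _ ≤ 3 * N * log r :=
        sum_log_primes_modEq_one_le hr (fun q hq ↦ (mem hq).1) (fun q hq ↦ (mem hq).2.1)
          (fun q hq ↦ hNY.trans_lt (mem hq).2.2.1) fun q hq ↦ (mem hq).2.2.2.trans le_mul
    _ = 3 * log r * (N * r) / r := by field_simp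
    _ ≤ 3 * log r * (3 * Y) / r := by gcongr
    _ = 9 * log r * Y / r := by ring

lemma recipSumModEqOne_two_mul_le {r Y : ℕ} (hr : r.Prime) (hY : r ≤ Y) :
    recipSumModEqOne r (2 * Y) ≤ recipSumModEqOne r Y + 9 * log r / (r * log Y) := by
  have hr0 : (0 : ℝ) < r := mod_cast hr.pos
  have hY1 : (1 : ℝ) < Y := mod_cast hr.one_lt.trans_le hY
  have hlog : 0 < log Y := log_pos hY1
  rw [recipSumModEqOne, recipSumModEqOne,
    ← sum_sdiff (primesModEqOne_mono r (by lia : Y ≤ 2 * Y)), add_comm]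
  gcongr
  set Q := primesModEqOne r (2 * Y) \ primesModEqOne r Y
  have inv_le (q : ℕ) (hq : q ∈ Q) : (q : ℝ)⁻¹ ≤ log q / (Y * log Y) := by
    have hYq : (Y : ℝ) ≤ q := mod_cast (by grind [mem_primesModEqOne] : Y ≤ q)
    rw [inv_eq_one_div, div_le_div_iff₀ (by linarith) (by positivity), one_mul, mul_comm (log _)]
    gcongr
  calc ∑ q ∈ Q, (q : ℝ)⁻¹ ≤ (∑ q ∈ Q, log q) / (Y * log Y) := by
        rw [sum_div]
        exact sum_le_sum inv_le
    _ ≤ 9 * log r * Y / r / (Y * log Y) := by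
      gcongr
      exact sum_log_dyadic_primesModEqOne_le hr hY
    _ = 9 * log r / (r * log Y) := by field_simp

lemma recipSumModEqOne_le_inv_of_lt_two_mul {r n : ℕ} (hr : 0 < r) (h : n < 2 * r) :
    recipSumModEqOne r n ≤ (r : ℝ)⁻¹ := by
  have hsub : primesModEqOne r n ⊆ {r + 1} := by
    intro q hq
    obtain ⟨⟨hqn, hq⟩, hmod⟩ := mem_primesModEqOne.mp hq
    obtain ⟨t, rfl⟩ := exists_eq_one_add_mul_of_modEq_one hq.one_lt hmod
    have ht : t + 1 < 2 := Nat.lt_of_mul_lt_mul_left (by lia : r * (t + 1) < r * 2)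
    obtain rfl : t = 0 := by lia
    simp [add_comm]
  have : (0 : ℝ) < r := mod_cast hr
  calc recipSumModEqOne r n ≤ ∑ q ∈ {r + 1}, (q : ℝ)⁻¹ :=
        sum_le_sum_of_subset_of_nonneg hsub fun _ _ _ ↦ by positivity
    _ ≤ (r : ℝ)⁻¹ := by
      rw [sum_singleton]
      gcongr
      simp

lemma recipSumModEqOne_two_pow_le {r : ℕ} (hr : r.Prime) (i : ℕ) :
    recipSumModEqOne r (2 ^ i) ≤ log r / r * (2 + 27 * harmonic i) := by
  have hr2 : (2 : ℝ) ≤ r := mod_cast hr.two_le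
  have hlog2 := log_two_gt_d9
  have hlog : log 2 ≤ log r := log_le_log (by norm_num) hr2
  have inv_le (i : ℕ) : (r : ℝ)⁻¹ ≤ log r / r * (2 + 27 * harmonic i) := by
    have : (0 : ℝ) ≤ harmonic i := mod_cast (by unfold harmonic; positivity : (0 : ℚ) ≤ harmonic i)
    rw [div_mul_eq_mul_div, inv_eq_one_div]
    gcongr
    nlinarith
  induction i with
  | zero =>
    have : 2 ^ 0 < 2 * r := by linarith [hr.two_le]
    exact (recipSumModEqOne_le_inv_of_lt_two_mul hr.pos this).trans (inv_le 0)
  | succ i ih =>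
    rw [pow_succ, mul_comm (2 ^ i)]
    rcases lt_or_ge (2 ^ i) r with hlt | hge
    · exact (recipSumModEqOne_le_inv_of_lt_two_mul hr.pos (by linarith)).trans (inv_le _)
    have hi : (1 : ℝ) ≤ i := by
      rcases i.eq_zero_or_pos with rfl | hi
      · linarith [hr.two_le]
      · exact_mod_cast hi
    have step : 9 * log r / (r * (i * log 2)) ≤ log r / r * (27 * ((i : ℝ) + 1)⁻¹) := by
      have : 9 * ((i : ℝ) + 1) ≤ 27 * (i * log 2) := by nlinarith
      calc 9 * log r / (r * (i * log 2)) = log r / r * (9 / (i * log 2)) := by field_simp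
        _ ≤ log r / r * (27 / (i + 1)) := by
          gcongr ?_ * ?_
          rwa [div_le_div_iff₀ (by positivity) (by positivity)]
        _ = log r / r * (27 * ((i : ℝ) + 1)⁻¹) := by rw [div_eq_mul_inv 27]
    have dyadic := recipSumModEqOne_two_mul_le hr hge
    rw [harmonic_succ]
    push_cast [log_pow] at dyadic ⊢
    linarith

lemma harmonic_clog_le {n : ℕ} (hn : exp 1 ≤ n) :
    (harmonic (Nat.clog 2 n) : ℝ) ≤ 3 + log (log n) := by
  have hn0 : (0 : ℝ) < n := (exp_pos 1).trans_le hn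
  have hlog : 1 ≤ log n := (le_log_iff_exp_le hn0).mpr hn
  have hn1 : 1 < n := mod_cast ((by simp : (1 : ℝ) < exp 1).trans_le hn)
  have hpos : 0 < Nat.clog 2 n := Nat.clog_pos (by norm_num) hn1
  have hpos' : (0 : ℝ) < Nat.clog 2 n := mod_cast hpos
  have clog_le : (Nat.clog 2 n : ℝ) ≤ 3 * log n := by
    have hpow : (2 : ℝ) ^ (Nat.clog 2 n - 1) ≤ n :=
      mod_cast (Nat.pow_pred_clog_lt_self (b := 2) (by norm_num) hn1).le
    have h := log_le_log (by positivity) hpow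
    push_cast [log_pow, Nat.cast_sub hpos] at h
    nlinarith [log_two_gt_d9]
  calc (harmonic (Nat.clog 2 n) : ℝ) ≤ 1 + log (Nat.clog 2 n) := harmonic_le_one_add_log _
    _ ≤ 1 + log (3 * log n) := by gcongr
    _ = 1 + log 3 + log (log n) := by rw [log_mul (by norm_num) (by linarith), add_assoc]
    _ ≤ 3 + log (log n) := by linarith [log_le_sub_one_of_pos (x := 3) (by norm_num)]

theorem recipSumModEqOne_le {r n : ℕ} (hr : r.Prime) (hn : exp 1 ≤ n) :
    recipSumModEqOne r n ≤ 100 * (log r / r) * (log (log n) + 1) := by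
  have hloglog : 0 ≤ log (log n) :=
    log_nonneg ((le_log_iff_exp_le ((exp_pos 1).trans_le hn)).mpr hn)
  calc recipSumModEqOne r n ≤ recipSumModEqOne r (2 ^ Nat.clog 2 n) :=
        recipSumModEqOne_mono r (Nat.le_pow_clog (by norm_num) n)
    _ ≤ log r / r * (2 + 27 * harmonic (Nat.clog 2 n)) := recipSumModEqOne_two_pow_le hr _
    _ ≤ log r / r * (2 + 27 * (3 + log (log n))) := by
      gcongr
      exact harmonic_clog_le hn
    _ ≤ log r / r * (100 * (log (log n) + 1)) := by
      gcongr
      linarith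
    _ = 100 * (log r / r) * (log (log n) + 1) := by ring

/-! ### Lower bounds for Dirichlet series of characters -/

lemma norm_sum_smul_le_of_antitone {E : Type*} [NormedAddCommGroup E] [NormedSpace ℝ E]
    {a : ℕ → E} {b : ℕ → ℝ} {B : ℝ} (ha : ∀ k, ‖∑ i ∈ range k, a i‖ ≤ B) (hb : Antitone b)
    (hb_nonneg : ∀ i, 0 ≤ b i) (k : ℕ) : ‖∑ i ∈ range k, b i • a i‖ ≤ B * b 0 := by
  have abel : ∑ i ∈ range k, b i • a i = b k • ∑ i ∈ range k, a i +
      ∑ i ∈ range k, (b i - b (i + 1)) • ∑ j ∈ range (i + 1), a j := by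
    induction k with
    | zero => simp
    | succ k ih =>
      rw [sum_range_succ, ih, sum_range_succ (fun i ↦ (b i - b (i + 1)) • _) k, sum_range_succ a k]
      module
  calc ‖∑ i ∈ range k, b i • a i‖
      ≤ ‖b k • ∑ i ∈ range k, a i‖ +
        ∑ i ∈ range k, ‖(b i - b (i + 1)) • ∑ j ∈ range (i + 1), a j‖ := by
        rw [abel]
        exact (norm_add_le _ _).trans (by gcongr; exact norm_sum_le _ _)
    _ ≤ b k * B + ∑ i ∈ range k, (b i - b (i + 1)) * B := by
        have hstep (i : ℕ) : 0 ≤ b i - b (i + 1) := sub_nonneg.2 (hb i.le_succ)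
        simp only [norm_smul, Real.norm_of_nonneg (hb_nonneg _), Real.norm_of_nonneg (hstep _)]
        gcongr with i
        · exact hb_nonneg k
        · exact ha k
        · exact hstep i
        · exact ha (i + 1)
    _ = B * b 0 := by rw [← sum_mul, sum_range_sub']; ring

section DirichletCharacter

variable {N : ℕ}

/-- The `k`-th partial sum `∑_{1 ≤ n ≤ k} χ(n) n⁻ˢ` of the Dirichlet series of `χ`, at real `s`. -/
noncomputable def characterPartialSum (χ : DirichletCharacter ℂ N) (s : ℝ) (k : ℕ) : ℂ :=
  ∑ i ∈ range k, ((1 + i : ℕ) : ℝ) ^ (-s) • χ (1 + i : ℕ)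

lemma tendsto_characterPartialSum (χ : DirichletCharacter ℂ N) {s : ℝ} (hs : 1 < s) :
    Tendsto (characterPartialSum χ s) atTop (𝓝 (LSeries (χ ·) s)) := by
  have hsum : LSeriesSummable (χ ·) (s : ℂ) :=
    DirichletCharacter.LSeriesSummable_of_one_lt_re χ (by simpa using hs)
  have hlim := (tendsto_add_atTop_iff_nat 1).2 hsum.hasSum.tendsto_sum_nat
  refine hlim.congr fun k ↦ ?_
  rw [sum_range_succ', LSeries.term_zero, add_zero, characterPartialSum]
  refine sum_congr rfl fun i _ ↦ ?_
  rw [add_comm 1 i, LSeries.term_of_ne_zero i.succ_ne_zero, Complex.real_smul,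
    Complex.ofReal_cpow (Nat.cast_nonneg _), Complex.ofReal_neg, Complex.cpow_neg,
    Complex.ofReal_natCast, div_eq_inv_mul]

variable [NeZero N] {χ : DirichletCharacter ℂ N}

lemma sum_range_character_eq_zero (hχ : χ ≠ 1) (m : ℕ) :
    ∑ i ∈ range N, χ (m + i : ℕ) = 0 := by
  rw [← MulChar.sum_eq_zero_of_ne_one hχ]
  refine sum_nbij' (fun i ↦ ((m + i : ℕ) : ZMod N)) (fun a ↦ (a - (m : ZMod N)).val)
    (fun _ _ ↦ mem_univ _) (fun a _ ↦ mem_range.2 (ZMod.val_lt _)) ?_ ?_ fun _ _ ↦ rfl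
  · intro i hi
    rw [Nat.cast_add, add_sub_cancel_left, ZMod.val_natCast_of_lt (mem_range.1 hi)]
  · intro a _
    rw [Nat.cast_add, ZMod.natCast_zmod_val, add_sub_cancel]

lemma norm_sum_range_character_le (hχ : χ ≠ 1) (m k : ℕ) :
    ‖∑ i ∈ range k, χ (m + i : ℕ)‖ ≤ N := by
  induction k using Nat.strong_induction_on generalizing m with
  | _ k ih =>
    rcases lt_or_ge k N with hk | hk
    · calc ‖∑ i ∈ range k, χ (m + i : ℕ)‖ ≤ ∑ _i ∈ range k, (1 : ℝ) :=
            norm_sum_le_of_le _ fun _ _ ↦ DirichletCharacter.norm_le_one χ _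
        _ ≤ N := by simpa using hk.le
    · obtain ⟨j, rfl⟩ := Nat.exists_eq_add_of_le hk
      rw [sum_range_add, sum_range_character_eq_zero hχ, zero_add]
      simpa only [add_assoc] using ih j (Nat.lt_add_of_pos_left (NeZero.pos N)) (m + N)

lemma norm_sum_smul_character_le (hχ : χ ≠ 1) (m : ℕ) {b : ℕ → ℝ} (hb : Antitone b)
    (hb_nonneg : ∀ i, 0 ≤ b i) (k : ℕ) :
    ‖∑ i ∈ range k, b i • χ (m + i : ℕ)‖ ≤ N * b 0 :=
  norm_sum_smul_le_of_antitone (norm_sum_range_character_le hχ m) hb hb_nonneg k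

lemma norm_LSeries_character_le (hχ : χ ≠ 1) {s : ℝ} (hs : 1 < s) :
    ‖LSeries (χ ·) s‖ ≤ N := by
  refine le_of_tendsto (tendsto_characterPartialSum χ hs).norm (.of_forall fun k ↦ ?_)
  have hanti : Antitone fun i : ℕ ↦ ((1 + i : ℕ) : ℝ) ^ (-s) := fun i j hij ↦
    rpow_le_rpow_of_nonpos (by positivity) (by gcongr) (by linarith)
  simpa only [add_zero, Nat.cast_one, one_rpow, mul_one] using!
    norm_sum_smul_character_le hχ 1 hanti (fun i ↦ by positivity) k

end DirichletCharacter

lemma antitoneOn_rpow_neg_sub_rpow_neg {s σ : ℝ} (hs : 1 ≤ s) (hσ : s ≤ σ) :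
    AntitoneOn (fun x : ℝ ↦ x ^ (-s) - x ^ (-σ)) (Set.Ici 3) := by
  have hderiv (x : ℝ) (hx : 0 < x) : HasDerivAt (fun x : ℝ ↦ x ^ (-s) - x ^ (-σ))
      (-s * x ^ (-s - 1) - -σ * x ^ (-σ - 1)) x :=
    (hasDerivAt_rpow_const (.inl hx.ne')).sub (hasDerivAt_rpow_const (.inl hx.ne'))
  have hpos {x : ℝ} (hx : x ∈ Set.Ici 3) : 0 < x := three_pos.trans_le hx
  refine antitoneOn_of_hasDerivWithinAt_nonpos (convex_Ici 3)
    (fun x hx ↦ (hderiv x (hpos hx)).continuousAt.continuousWithinAt)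
    (fun x hx ↦ (hderiv x (hpos (interior_subset hx))).hasDerivWithinAt) fun x hx ↦ ?_
  have hx3 : 3 ≤ x := interior_subset hx
  have hx0 : 0 < x := hpos hx3
  have hlog : 1 ≤ log x := by
    rw [le_log_iff_exp_le hx0]
    linarith [exp_one_lt_three]
  have hratio : σ ≤ s * x ^ (σ - s) := by
    have : 1 + (σ - s) ≤ x ^ (σ - s) := by
      rw [rpow_def_of_pos hx0]
      nlinarith [add_one_le_exp (log x * (σ - s))]
    nlinarith
  have hsplit : x ^ (-s - 1) = x ^ (-σ - 1) * x ^ (σ - s) := by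
    rw [← rpow_add hx0]
    ring_nf
  rw [hsplit]
  nlinarith [rpow_pos_of_pos hx0 (-σ - 1)]

lemma rpow_neg_sub_rpow_neg_le {s σ x : ℝ} (hs : 1 ≤ s) (hσ : s ≤ σ) (hx : 1 ≤ x) :
    x ^ (-s) - x ^ (-σ) ≤ σ - s := by
  have hx0 : 0 < x := by linarith
  have hsplit : x ^ (-σ) = x ^ (-s) * x ^ (-(σ - s)) := by
    rw [← rpow_add hx0]
    ring_nf
  have hexp : 1 - log x * (σ - s) ≤ x ^ (-(σ - s)) := by
    rw [rpow_def_of_pos hx0]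
    linarith [add_one_le_exp (log x * -(σ - s))]
  have hle : x ^ (-s) * log x ≤ 1 := by
    calc x ^ (-s) * log x ≤ x ^ (-1 : ℝ) * x := by
          gcongr
          · exact log_nonneg hx
          · exact log_le_self hx0.le
      _ = 1 := by rw [rpow_neg_one, inv_mul_cancel₀ hx0.ne']
  calc x ^ (-s) - x ^ (-σ) = x ^ (-s) * (1 - x ^ (-(σ - s))) := by rw [hsplit]; ring
    _ ≤ x ^ (-s) * (log x * (σ - s)) := by gcongr; linarith
    _ ≤ σ - s := by nlinarith

lemma rpow_neg_le_rpow_neg {s σ x : ℝ} (hσ : s ≤ σ) (hx : 1 ≤ x) : x ^ (-σ) ≤ x ^ (-s) :=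
  rpow_le_rpow_of_exponent_le hx (neg_le_neg hσ)

section DirichletCharacter

variable {N : ℕ} [NeZero N] {χ : DirichletCharacter ℂ N}

lemma norm_characterPartialSum_sub_le (hχ : χ ≠ 1) {s σ : ℝ} (hs : 1 ≤ s) (hσ : s ≤ σ) (k : ℕ) :
    ‖characterPartialSum χ s (2 + k) - characterPartialSum χ σ (2 + k)‖ ≤ (N + 1) * (σ - s) := by
  -- The weight is antitone only from `3` on, so the term `n = 2` is estimated separately.
  let b (n : ℕ) : ℝ := (n : ℝ) ^ (-s) - (n : ℝ) ^ (-σ)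
  have hb_nonneg (n : ℕ) (hn : 1 ≤ n) : 0 ≤ b n :=
    sub_nonneg.2 (rpow_neg_le_rpow_neg hσ (by exact_mod_cast hn))
  have hb_le (n : ℕ) (hn : 1 ≤ n) : b n ≤ σ - s :=
    rpow_neg_sub_rpow_neg_le hs hσ (by exact_mod_cast hn)
  have hb_anti : Antitone fun i ↦ b (3 + i) := fun i j hij ↦
    antitoneOn_rpow_neg_sub_rpow_neg hs hσ (by simp) (by simp) (by gcongr)
  have hhead : ‖b 2 • χ (2 : ℕ)‖ ≤ σ - s := by
    rw [norm_smul, Real.norm_of_nonneg (hb_nonneg 2 (by norm_num))]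
    exact (mul_le_of_le_one_right (hb_nonneg 2 (by norm_num))
      (DirichletCharacter.norm_le_one χ _)).trans (hb_le 2 (by norm_num))
  have htail : ‖∑ i ∈ range k, b (3 + i) • χ (3 + i : ℕ)‖ ≤ N * (σ - s) :=
    (norm_sum_smul_character_le hχ 3 hb_anti (fun i ↦ hb_nonneg _ (by lia)) k).trans
      (by gcongr; exact hb_le 3 (by norm_num))
  have hsum : characterPartialSum χ s (2 + k) - characterPartialSum χ σ (2 + k) =
      b 2 • χ (2 : ℕ) + ∑ i ∈ range k, b (3 + i) • χ (3 + i : ℕ) := by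
    simp only [characterPartialSum, ← sum_sub_distrib, ← sub_smul]
    rw [sum_range_add, sum_range_succ, sum_range_one]
    simp [b, ← add_assoc]
  rw [hsum]
  linarith [norm_add_le (b 2 • χ (2 : ℕ)) (∑ i ∈ range k, b (3 + i) • χ (3 + i : ℕ))]

lemma norm_LSeries_character_sub_le (hχ : χ ≠ 1) {s σ : ℝ} (hs : 1 < s) (hσ : s ≤ σ) :
    ‖LSeries (χ ·) s - LSeries (χ ·) σ‖ ≤ (N + 1) * (σ - s) := by
  have hlim := ((tendsto_characterPartialSum χ hs).sub
    (tendsto_characterPartialSum χ (hs.trans_le hσ))).norm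
  refine le_of_tendsto hlim ?_
  filter_upwards [eventually_ge_atTop 2] with k hk
  obtain ⟨j, rfl⟩ := Nat.exists_eq_add_of_le hk
  exact norm_characterPartialSum_sub_le hχ hs.le hσ j

end DirichletCharacter

lemma mul_pow_le_sum_sq_pow (r : ℝ) (n : ℕ) :
    (n : ℝ) * r ^ (n - 1) ≤ ∑ i ∈ range n, (r ^ 2) ^ i := by
  have hpair : ∑ _i ∈ range n, 2 * r ^ (n - 1) ≤
      ∑ i ∈ range n, ((r ^ 2) ^ i + (r ^ 2) ^ (n - 1 - i)) := by
    refine sum_le_sum fun i hi ↦ ?_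
    have hprod : r ^ (n - 1) = r ^ i * r ^ (n - 1 - i) := by
      rw [← pow_add, Nat.add_sub_cancel' (by have := mem_range.1 hi; lia)]
    rw [hprod, pow_right_comm r 2, pow_right_comm r 2]
    nlinarith [sq_nonneg (r ^ i - r ^ (n - 1 - i))]
  rw [sum_add_distrib, sum_range_reflect (fun i ↦ (r ^ 2) ^ i), sum_const, card_range,
    nsmul_eq_mul] at hpair
  linarith

/-- Monsky's weight, the difference of `1 / (n (1 - t))` and the Lambert weight
`tⁿ / (1 - tⁿ)`; it is bounded as `t → 1`. -/
noncomputable def monskyWeight (t : ℝ) (n : ℕ) : ℝ := 1 / (n * (1 - t)) - t ^ n / (1 - t ^ n)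

section MonskyWeight

variable {t : ℝ}

lemma monskyWeight_one (ht1 : t < 1) : monskyWeight t 1 = 1 := by
  rw [monskyWeight, Nat.cast_one, one_mul, pow_one, ← sub_div, div_self (sub_pos.2 ht1).ne']

lemma mul_add_one_mul_pow_le (ht0 : 0 < t) (ht1 : t < 1) (n : ℕ) :
    (n : ℝ) * (n + 1) * t ^ n ≤ (∑ i ∈ range n, t ^ i) * ∑ i ∈ range (n + 1), t ^ i := by
  obtain ⟨r, hr0, rfl⟩ : ∃ r : ℝ, 0 < r ∧ t = r ^ 2 :=
    ⟨√t, sqrt_pos.2 ht0, (sq_sqrt ht0.le).symm⟩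
  have hr1 : r ≤ 1 := by nlinarith
  calc (n : ℝ) * (n + 1) * (r ^ 2) ^ n ≤ (n : ℝ) * (n + 1) * (r ^ (n - 1) * r ^ n) := by
        gcongr
        rw [← pow_mul, ← pow_add]
        exact pow_le_pow_of_le_one hr0.le hr1 (by lia)
    _ = (n * r ^ (n - 1)) * ((n + 1 : ℕ) * r ^ (n + 1 - 1)) := by
        rw [Nat.add_sub_cancel]
        push_cast
        ring
    _ ≤ _ := by gcongr <;> exact mul_pow_le_sum_sq_pow r _

lemma monskyWeight_succ_le (ht0 : 0 < t) (ht1 : t < 1) {n : ℕ} (hn : 1 ≤ n) :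
    monskyWeight t (n + 1) ≤ monskyWeight t n := by
  have hkey := mul_add_one_mul_pow_le ht0 ht1 n
  have hgeom := mul_neg_geom_sum t n
  have hgeom' := mul_neg_geom_sum t (n + 1)
  have hG : 0 < ∑ i ∈ range n, t ^ i := sum_pos (fun i _ ↦ pow_pos ht0 i) ⟨0, by simp; lia⟩
  have hG' : 0 < ∑ i ∈ range (n + 1), t ^ i := sum_pos (fun i _ ↦ pow_pos ht0 i) ⟨0, by simp⟩
  generalize ∑ i ∈ range n, t ^ i = G at *
  generalize ∑ i ∈ range (n + 1), t ^ i = G' at *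
  have ht : 0 < 1 - t := sub_pos.2 ht1
  have : (0 : ℝ) < n := by exact_mod_cast hn
  have hlambert : t ^ n / (1 - t ^ n) - t ^ (n + 1) / (1 - t ^ (n + 1)) =
      t ^ n / ((1 - t) * (G * G')) := by
    have hnum : t ^ n * ((1 - t) * G') - (1 - t) * G * t ^ (n + 1) = t ^ n * (1 - t) := by
      rw [hgeom, hgeom']
      ring
    rw [← hgeom, ← hgeom', div_sub_div _ _ (by positivity) (by positivity), hnum]
    field_simp
  have hrecip : 1 / ((n : ℝ) * (1 - t)) - 1 / ((n + 1 : ℕ) * (1 - t)) =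
      1 / ((1 - t) * (n * (n + 1))) := by
    push_cast
    field_simp
    ring
  have hle : t ^ n / ((1 - t) * (G * G')) ≤ 1 / ((1 - t) * (n * (n + 1))) := by
    rw [div_le_div_iff₀ (by positivity) (by positivity)]
    nlinarith
  rw [monskyWeight, monskyWeight]
  linarith

lemma monskyWeight_nonneg (ht0 : 0 < t) (ht1 : t < 1) {n : ℕ} (hn : 1 ≤ n) :
    0 ≤ monskyWeight t n := by
  have : (0 : ℝ) < n := by exact_mod_cast hn
  have : 0 < 1 - t := sub_pos.2 ht1
  have hgeom : (n : ℝ) * t ^ n ≤ ∑ i ∈ range n, t ^ i := by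
    simpa using card_nsmul_le_sum (range n) (fun i ↦ t ^ i) (t ^ n) fun i hi ↦
      pow_le_pow_of_le_one ht0.le ht1.le (mem_range.1 hi).le
  have hpow : t ^ n < 1 := pow_lt_one₀ ht0.le ht1 (by lia)
  rw [monskyWeight, sub_nonneg, div_le_div_iff₀ (by linarith) (by positivity),
    ← mul_neg_geom_sum t n]
  nlinarith

lemma exists_hasSum_lambert {f : ℕ → ℂ} (hf : ∀ n, ‖f n‖ ≤ 1) (ht0 : 0 < t) (ht1 : t < 1) :
    ∃ S : ℂ, HasSum (fun n : ℕ+ ↦ (t ^ (n : ℕ) / (1 - t ^ (n : ℕ))) • f n) S ∧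
      HasSum (fun m : ℕ+ ↦ t ^ (m : ℕ) • ∑ d ∈ (m : ℕ).divisors, f d) S := by
  have hnorm : ‖t‖ < 1 := by rwa [Real.norm_of_nonneg ht0.le]
  have hsum : Summable fun c : ℕ+ × ℕ+ ↦ t ^ (c.1 * c.2 : ℕ) • f c.1 := by
    refine .of_norm_bounded (summable_prod_mul_pow 0 hnorm) fun c ↦ ?_
    rw [norm_smul, Real.norm_of_nonneg (by positivity), pow_zero, one_mul]
    exact mul_le_of_le_one_right (by positivity) (hf _)
  have hsigma := (sigmaAntidiagonalEquivProd.hasSum_iff.2 hsum.hasSum).sigma fun m ↦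
    hasSum_fintype _
  refine ⟨_, hsum.hasSum.prod_fiberwise fun n ↦ ?_, ?_⟩
  · have hpow : t ^ (n : ℕ) < 1 := pow_lt_one₀ ht0.le ht1 n.ne_zero
    have hgeom := (hasSum_geometric_of_lt_one (by positivity) hpow).mul_left (t ^ (n : ℕ))
    refine HasSum.smul_const ?_ (f n)
    rw [← Equiv.pnatEquivNat.symm.hasSum_iff, div_eq_mul_inv]
    refine hgeom.congr_fun fun k ↦ ?_
    simp [pow_mul, pow_succ']
  · refine hsigma.congr_fun fun m ↦ ?_
    calc t ^ (m : ℕ) • ∑ d ∈ (m : ℕ).divisors, f d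
        = ∑ d ∈ (m : ℕ).divisors, t ^ (d * (m / d)) • f d := by
          rw [smul_sum]
          exact sum_congr rfl fun d hd ↦ by rw [Nat.mul_div_cancel' (Nat.dvd_of_mem_divisors hd)]
      _ = ∑ c ∈ (m : ℕ).divisorsAntidiagonal, t ^ (c.1 * c.2) • f c.1 :=
          (Nat.sum_divisorsAntidiagonal fun a b ↦ t ^ (a * b) • f a).symm
      _ = _ := (sum_coe_sort _ fun c : ℕ × ℕ ↦ t ^ (c.1 * c.2) • f c.1).symm

end MonskyWeight

section DirichletCharacter

open scoped ComplexOrder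

variable {N : ℕ} {χ : DirichletCharacter ℂ N}

lemma zetaMul_apply (χ : DirichletCharacter ℂ N) (m : ℕ) :
    χ.zetaMul m = ∑ d ∈ m.divisors, χ d := by
  rw [DirichletCharacter.zetaMul, ArithmeticFunction.coe_zeta_mul_apply]
  exact sum_congr rfl fun d hd ↦ by
    simp [toArithmeticFunction, (Nat.pos_of_mem_divisors hd).ne']

lemma one_le_zetaMul_prime_pow_two_mul (hχ : χ ^ 2 = 1) {q : ℕ} (hq : q.Prime) (k : ℕ) :
    1 ≤ χ.zetaMul (q ^ (2 * k)) := by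
  rw [zetaMul_apply, Nat.sum_divisors_prime_pow hq]
  simp only [Nat.cast_pow, map_pow]
  rcases MulChar.isQuadratic_iff_sq_eq_one.2 hχ (q : ZMod N) with h | h | h <;> rw [h]
  · simp [sum_range_succ']
  · simpa using mul_nonneg (zero_le_two (α := ℂ)) (Nat.cast_nonneg k)
  · simp [neg_one_geom_sum]

lemma one_le_zetaMul_sq (hχ : χ ^ 2 = 1) {m : ℕ} (hm : m ≠ 0) : 1 ≤ χ.zetaMul (m ^ 2) := by
  rw [χ.isMultiplicative_zetaMul.multiplicative_factorization _ (pow_ne_zero 2 hm), Finsupp.prod]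
  refine one_le_prod fun q hq ↦ ?_
  rw [Nat.factorization_pow, Finsupp.smul_apply, smul_eq_mul]
  exact one_le_zetaMul_prime_pow_two_mul hχ (Nat.prime_of_mem_primeFactors hq) _

lemma half_le_re_pow_sq_smul_zetaMul (hχ : χ ^ 2 = 1) {u : ℝ} (hu1 : u ≤ 1) {m : ℕ}
    (hm : m ≠ 0) (hum : (m : ℝ) ^ 2 * u ≤ 1 / 2) :
    1 / 2 ≤ ((1 - u) ^ (m ^ 2) • χ.zetaMul (m ^ 2)).re := by
  have hzeta : 1 ≤ (χ.zetaMul (m ^ 2)).re := (Complex.le_def.1 (one_le_zetaMul_sq hχ hm)).1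
  have hpow : 1 / 2 ≤ (1 - u) ^ (m ^ 2) := by
    have := one_add_mul_le_pow (a := -u) (by linarith) (m ^ 2)
    rw [← sub_eq_add_neg, Nat.cast_pow] at this
    linarith
  rw [Complex.smul_re, smul_eq_mul]
  nlinarith

lemma half_le_norm_of_hasSum_zetaMul (hχ : χ ^ 2 = 1) {K : ℕ} (hK : 1 ≤ K) {S : ℂ}
    (hS : HasSum (fun m : ℕ+ ↦ (1 - 1 / (2 * (K : ℝ) ^ 2)) ^ (m : ℕ) • χ.zetaMul m) S) :
    (K : ℝ) / 2 ≤ ‖S‖ := by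
  have hK1 : (1 : ℝ) ≤ K := by exact_mod_cast hK
  set u : ℝ := 1 / (2 * (K : ℝ) ^ 2) with hu
  have hu_half : u ≤ 1 / 2 := one_div_le_one_div_of_le two_pos (by nlinarith)
  have huK : u * (K : ℝ) ^ 2 = 1 / 2 := by rw [hu]; field_simp
  have hpow_nonneg (m : ℕ) : 0 ≤ (1 - u) ^ m := pow_nonneg (by linarith) m
  have hterm_nonneg (m : ℕ+) : 0 ≤ ((1 - u) ^ (m : ℕ) • χ.zetaMul m).re := by
    rw [Complex.smul_re]
    exact smul_nonneg (hpow_nonneg m) (Complex.le_def.1 (DirichletCharacter.zetaMul_nonneg hχ m)).1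
  have hinj : Set.InjOn (fun i : ℕ ↦ i.succPNat ^ 2) (range K) := fun i _ j _ hij ↦
    Nat.succPNat_injective (pow_left_injective two_ne_zero hij)
  calc (K : ℝ) / 2 = ∑ _i ∈ range K, (1 / 2 : ℝ) := by simp; ring
    _ ≤ ∑ i ∈ range K, ((1 - u) ^ ((i + 1) ^ 2) • χ.zetaMul ((i + 1) ^ 2)).re :=
        sum_le_sum fun i hi ↦ by
          have hi' : ((i + 1 : ℕ) : ℝ) ≤ K := by exact_mod_cast mem_range.1 hi
          exact half_le_re_pow_sq_smul_zetaMul hχ (by linarith) i.succ_ne_zero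
            (by rw [← huK, mul_comm u]; gcongr)
    _ = ∑ m ∈ ((range K).image fun i ↦ i.succPNat ^ 2 : Finset ℕ+),
          ((1 - u) ^ (m : ℕ) • χ.zetaMul m).re := by
        rw [sum_image hinj]
        simp
    _ ≤ S.re := sum_le_hasSum _ (fun m _ ↦ hterm_nonneg m) (Complex.hasSum_re hS)
    _ ≤ ‖S‖ := Complex.re_le_norm S

variable [NeZero N]

lemma norm_characterPartialSum_one_sub_le (hχ : χ ≠ 1) {t : ℝ} (ht0 : 0 < t) (ht1 : t < 1)
    (k : ℕ) :
    ‖(1 - t)⁻¹ • characterPartialSum χ 1 k -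
      ∑ i ∈ range k, (t ^ (1 + i) / (1 - t ^ (1 + i))) • χ (1 + i : ℕ)‖ ≤ N := by
  have hanti : Antitone fun i ↦ monskyWeight t (1 + i) :=
    antitone_nat_of_succ_le fun i ↦ monskyWeight_succ_le ht0 ht1 (by lia)
  have habel := norm_sum_smul_character_le hχ 1 hanti
    (fun i ↦ monskyWeight_nonneg ht0 ht1 (by lia)) k
  rw [add_zero, monskyWeight_one ht1, mul_one] at habel
  convert habel using 2
  rw [characterPartialSum, smul_sum, ← sum_sub_distrib]
  refine sum_congr rfl fun i _ ↦ ?_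
  rw [smul_smul, ← sub_smul, monskyWeight, rpow_neg_one, one_div, mul_inv_rev]

lemma one_sub_mul_norm_lambert_le (hχ : χ ≠ 1) {s t : ℝ} (hs : 1 < s) (ht0 : 0 < t) (ht1 : t < 1)
    {S : ℂ} (hS : HasSum (fun n : ℕ+ ↦ (t ^ (n : ℕ) / (1 - t ^ (n : ℕ))) • χ (n : ℕ)) S) :
    (1 - t) * ‖S‖ ≤ (1 - t) * N + (‖LSeries (χ ·) s‖ + (N + 1) * (s - 1)) := by
  have ht : 0 < 1 - t := sub_pos.2 ht1
  have hlambert : Tendsto (fun k ↦ ∑ i ∈ range k, (t ^ (1 + i) / (1 - t ^ (1 + i))) •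
      χ (1 + i : ℕ)) atTop (𝓝 S) := by
    refine (Equiv.pnatEquivNat.symm.hasSum_iff.2 hS).tendsto_sum_nat.congr fun k ↦ ?_
    exact sum_congr rfl fun i _ ↦ by simp [add_comm]
  refine le_of_tendsto_of_tendsto (hlambert.norm.const_mul (1 - t))
    (((tendsto_characterPartialSum χ hs).norm.add_const _).const_add _) ?_
  filter_upwards [eventually_ge_atTop 2] with k hk
  obtain ⟨j, rfl⟩ := Nat.exists_eq_add_of_le hk
  have hmonsky := norm_characterPartialSum_one_sub_le hχ ht0 ht1 (2 + j)
  have hlip := norm_characterPartialSum_sub_le hχ le_rfl hs.le j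
  generalize ∑ i ∈ range (2 + j), (t ^ (1 + i) / (1 - t ^ (1 + i))) • χ (1 + i : ℕ) = F at *
  have hF : ‖F‖ ≤ N + (1 - t)⁻¹ * ‖characterPartialSum χ 1 (2 + j)‖ := by
    have := norm_sub_norm_le F ((1 - t)⁻¹ • characterPartialSum χ 1 (2 + j))
    rw [norm_sub_rev, norm_smul, Real.norm_of_nonneg (inv_nonneg.2 ht.le)] at this
    linarith
  calc (1 - t) * ‖F‖ ≤ (1 - t) * (N + (1 - t)⁻¹ * ‖characterPartialSum χ 1 (2 + j)‖) := by gcongr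
    _ = (1 - t) * N + ‖characterPartialSum χ 1 (2 + j)‖ := by field_simp
    _ ≤ _ := by
        gcongr
        linarith [norm_sub_norm_le (characterPartialSum χ 1 (2 + j))
          (characterPartialSum χ s (2 + j))]

theorem le_norm_LSeries_of_sq_eq_one (hχ : χ ≠ 1) (hχ2 : χ ^ 2 = 1) {s : ℝ} (hs : 1 < s) :
    1 / (32 * (N : ℝ)) - (N + 1) * (s - 1) ≤ ‖LSeries (χ ·) s‖ := by
  have hN : (1 : ℝ) ≤ N := by exact_mod_cast NeZero.one_le
  set t : ℝ := 1 - 1 / (2 * ((4 * N : ℕ) : ℝ) ^ 2) with ht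
  have ht' : 1 - t = 1 / (32 * (N : ℝ) ^ 2) := by
    rw [ht]
    push_cast
    ring
  have hpos : 0 < 1 - t := by
    rw [ht']
    positivity
  have hlt : 1 - t < 1 := by
    rw [ht', div_lt_one (by positivity)]
    nlinarith
  obtain ⟨S, hlambert, hzeta⟩ := exists_hasSum_lambert (f := fun n ↦ χ n) (t := t)
    (fun n ↦ DirichletCharacter.norm_le_one χ _) (by linarith) (by linarith)
  have hlower : (4 * N : ℕ) / 2 ≤ ‖S‖ := half_le_norm_of_hasSum_zetaMul hχ2
    (by have := NeZero.pos N; lia) (by simpa only [zetaMul_apply] using hzeta)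
  have hupper := one_sub_mul_norm_lambert_le hχ hs (by linarith) (by linarith) hlambert
  have hmul : (1 - t) * (2 * N) ≤ (1 - t) * ‖S‖ := by
    gcongr
    push_cast at hlower
    linarith
  have hval : (1 - t) * N = 1 / (32 * (N : ℝ)) := by
    rw [ht']
    field_simp
  linarith

/-- Evaluating `|L(s,1)³ L(s,χ)⁴ L(s,χ²)| ≥ 1` at `s = 1 + 1 / (A N⁵)`. -/
theorem le_norm_LSeries_of_sq_ne_one (hχ2 : χ ^ 2 ≠ 1) {A η : ℝ} (hA : 2048 < A)
    (hη : η = 1 / (A * (N : ℝ) ^ 5))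
    (htriv : η * ‖LSeries ((1 : DirichletCharacter ℂ N) ·) (1 + η : ℝ)‖ ≤ 2) :
    4 / (A * (N : ℝ) ^ 4) ≤ ‖LSeries (χ ·) (1 + η : ℝ)‖ := by
  have hN : (0 : ℝ) < N := by exact_mod_cast NeZero.pos N
  have hη0 : 0 < η := by
    rw [hη]
    positivity
  have hprod := DirichletCharacter.norm_LSeries_product_ge_one χ hη0 0
  rw [Complex.ofReal_zero, mul_zero, mul_zero, add_zero,
    show 1 + (η : ℂ) = ((1 + η : ℝ) : ℂ) by push_cast; rfl, norm_mul, norm_mul, norm_pow,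
    norm_pow] at hprod
  have hL1 : ‖LSeries ((1 : DirichletCharacter ℂ N) ·) (1 + η : ℝ)‖ ≤ 2 / η := by
    rwa [le_div_iff₀' hη0]
  have hL2 : ‖LSeries ((χ ^ 2) ·) (1 + η : ℝ)‖ ≤ N :=
    norm_LSeries_character_le hχ2 (by linarith)
  by_contra! hlt
  have hle : ‖LSeries ((1 : DirichletCharacter ℂ N) ·) (1 + η : ℝ)‖ ^ 3 *
      ‖LSeries (χ ·) (1 + η : ℝ)‖ ^ 4 * ‖LSeries ((χ ^ 2) ·) (1 + η : ℝ)‖ ≤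
      (2 / η) ^ 3 * (4 / (A * (N : ℝ) ^ 4)) ^ 4 * N := by
    gcongr
  have hval : (2 / η) ^ 3 * (4 / (A * (N : ℝ) ^ 4)) ^ 4 * N = 2048 / A := by
    rw [hη]
    field_simp
    norm_num
  have hlt_one : 2048 / A < 1 := by rwa [div_lt_one (by linarith)]
  linarith

/-- A lower bound at `1 + η` is carried to `1 + δ` by the Lipschitz estimate, unless `χ` is
quadratic, where the bound is already uniform in `s`. -/
lemma le_norm_LSeries_of_ne_one (hχ : χ ≠ 1) {A δ η : ℝ} (hA : 2048 < A)
    (hη : η = 1 / (A * (N : ℝ) ^ 5)) (hδ : 0 < δ) (hδη : δ ≤ η)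
    (htriv : η * ‖LSeries ((1 : DirichletCharacter ℂ N) ·) (1 + η : ℝ)‖ ≤ 2) :
    1 / (A * (N : ℝ) ^ 4) ≤ ‖LSeries (χ ·) (1 + δ : ℝ)‖ := by
  have hN : (1 : ℝ) ≤ N := by exact_mod_cast NeZero.one_le
  have hpos : 0 < 1 / (A * (N : ℝ) ^ 4) := by positivity
  have hdiv (c : ℝ) : c / (A * (N : ℝ) ^ 4) = c * (1 / (A * (N : ℝ) ^ 4)) := by ring
  have hlip : (N + 1) * η ≤ 2 * (1 / (A * (N : ℝ) ^ 4)) := by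
    calc (N + 1) * η ≤ (2 * N) * η := by gcongr <;> linarith
      _ = 2 * (1 / (A * (N : ℝ) ^ 4)) := by
        rw [hη]
        field_simp
  by_cases hχ2 : χ ^ 2 = 1
  · have hquad := le_norm_LSeries_of_sq_eq_one hχ hχ2 (s := 1 + δ) (by linarith)
    have hδle : (N + 1) * (1 + δ - 1) ≤ (N + 1) * η := by gcongr; linarith
    have hthree : 3 * (1 / (A * (N : ℝ) ^ 4)) ≤ 1 / (32 * (N : ℝ)) := by
      rw [← hdiv, div_le_div_iff₀ (by positivity) (by positivity)]
      have hcube : 96 ≤ A * (N : ℝ) ^ 3 := by nlinarith [one_le_pow₀ hN (n := 3)]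
      nlinarith
    linarith
  · have hη_lower := le_norm_LSeries_of_sq_ne_one hχ2 hA hη htriv
    rw [hdiv] at hη_lower
    have hdiff := norm_LSeries_character_sub_le hχ (s := 1 + δ) (σ := 1 + η) (by linarith)
      (by linarith)
    have hle : (N + 1) * (1 + η - (1 + δ)) ≤ (N + 1) * η := by gcongr; linarith
    rw [norm_sub_rev] at hdiff
    linarith [norm_sub_norm_le (LSeries (χ ·) (1 + η : ℝ)) (LSeries (χ ·) (1 + δ : ℝ))]

end DirichletCharacter

lemma norm_LSeries_one {p : ℕ} [hp : Fact p.Prime] {s : ℝ} (hs : 1 < s) :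
    ‖LSeries ((1 : DirichletCharacter ℂ p) ·) s‖ =
      (1 - (p : ℝ) ^ (-s)) * ∑' n : ℕ, 1 / (n : ℝ) ^ s := by
  have hs' : 1 < (s : ℂ).re := by simpa using hs
  have hfactor := DirichletCharacter.LFunctionTrivChar_eq_mul_riemannZeta (N := p) (s := (s : ℂ))
    fun h ↦ by simp [h] at hs'
  rw [DirichletCharacter.LFunctionTrivChar, DirichletCharacter.LFunction_eq_LSeries _ hs',
    hp.out.primeFactors, prod_singleton, zeta_eq_tsum_one_div_nat_cpow hs'] at hfactor
  have hreal : LSeries ((1 : DirichletCharacter ℂ p) ·) s =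
      (((1 - (p : ℝ) ^ (-s)) * ∑' n : ℕ, 1 / (n : ℝ) ^ s : ℝ) : ℂ) := by
    push_cast [Complex.ofReal_tsum, Complex.ofReal_cpow (Nat.cast_nonneg _)]
    exact hfactor
  have hle : (p : ℝ) ^ (-s) ≤ 1 / 2 := prime_rpow_neg_le_half hp.out hs.le
  rw [hreal, Complex.norm_of_nonneg
    (mul_nonneg (by linarith) (tsum_nonneg fun n ↦ by positivity))]

lemma exists_forall_mul_norm_LSeries_one_mem_Icc : ∃ d > 0, ∀ (p : ℕ) [Fact p.Prime] (δ : ℝ),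
    0 < δ → δ < d →
      δ * ‖LSeries ((1 : DirichletCharacter ℂ p) ·) (1 + δ : ℝ)‖ ∈ Set.Icc (1 / 4) 2 := by
  have hev := tendsto_mul_tsum_one_div_rpow.eventually
    (Icc_mem_nhds (show (1 / 2 : ℝ) < 1 by norm_num) (show (1 : ℝ) < 2 by norm_num))
  obtain ⟨d, hd, hzeta⟩ := mem_nhdsGT_iff_exists_Ioo_subset.1 hev
  refine ⟨d, hd, fun p hp δ hδ hδd ↦ ?_⟩
  obtain ⟨hlower, hupper⟩ := hzeta ⟨hδ, hδd⟩
  have hp_nonneg : 0 ≤ (p : ℝ) ^ (-(1 + δ)) := by positivity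
  have hp_half : (p : ℝ) ^ (-(1 + δ)) ≤ 1 / 2 := prime_rpow_neg_le_half hp.out (by linarith)
  rw [norm_LSeries_one (by linarith), mul_left_comm]
  constructor <;> nlinarith

theorem exists_forall_le_norm_LSeries : ∃ A : ℝ, 1 ≤ A ∧ ∀ (p : ℕ) [Fact p.Prime] (δ : ℝ), 0 < δ →
    δ * (A * (p : ℝ) ^ 5) ≤ 1 →
      1 / 4 ≤ δ * ‖LSeries ((1 : DirichletCharacter ℂ p) ·) (1 + δ : ℝ)‖ ∧
      ∀ χ : DirichletCharacter ℂ p, χ ≠ 1 →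
        1 / (A * (p : ℝ) ^ 4) ≤ ‖LSeries (χ ·) (1 + δ : ℝ)‖ := by
  obtain ⟨d, hd, htriv⟩ := exists_forall_mul_norm_LSeries_one_mem_Icc
  have hd_inv : 0 < 1 / d := by positivity
  set A := 2048 + 1 / d
  refine ⟨A, by linarith, fun p hp δ hδ hδA ↦ ?_⟩
  have hp1 : (1 : ℝ) ≤ p := by exact_mod_cast hp.out.one_le
  set η := 1 / (A * (p : ℝ) ^ 5) with hη
  have hη0 : 0 < η := by positivity
  have hδη : δ ≤ η := by rwa [hη, le_div_iff₀ (by positivity)]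
  have hηd : η < d := by
    calc η ≤ 1 / A := by
          rw [hη]
          gcongr
          exact le_mul_of_one_le_right (by positivity) (one_le_pow₀ hp1)
      _ < d := by rw [div_lt_comm₀ (by positivity) hd]; linarith
  exact ⟨(htriv p δ hδ (by linarith)).1, fun χ hχ ↦
    le_norm_LSeries_of_ne_one hχ (by linarith) hη hδ hδη (htriv p η hη0 hηd).2⟩

/-! ### Reciprocals of primes congruent to one: lower bound -/

/-- The prime zeta function restricted to the primes `q ≡ 1 (mod N)`: `∑ q⁻ˢ`. -/
noncomputable def primeZetaModEqOne (N : ℕ) (s : ℝ) : ℝ :=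
  ∑' q : Nat.Primes, if ((q : ℕ) : ZMod N) = 1 then (q : ℝ) ^ (-s) else 0

/-- The value `∑ q⁻²` of the prime zeta function at `2`, bounding the contribution of the higher
prime powers to the logarithm of an Euler product. -/
noncomputable def primeZetaTwo : ℝ := ∑' q : Nat.Primes, (q : ℝ) ^ (-(2 : ℝ))

lemma primeZetaTwo_nonneg : 0 ≤ primeZetaTwo :=
  tsum_nonneg fun _ ↦ by positivity

lemma re_neg_log_one_sub_le {w : ℂ} (hw : ‖w‖ ≤ 1 / 2) :
    (-Complex.log (1 - w)).re ≤ w.re + ‖w‖ ^ 2 := by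
  have htaylor := Complex.norm_log_one_add_sub_self_le (z := -w) (by rw [norm_neg]; linarith)
  rw [norm_neg, ← sub_eq_add_neg] at htaylor
  have hinv : (1 - ‖w‖)⁻¹ ≤ 2 := by
    rw [inv_le_comm₀ (by linarith) two_pos]
    linarith
  have hre := (neg_le_abs _).trans ((Complex.abs_re_le_norm _).trans htaylor)
  rw [Complex.sub_re, Complex.neg_re] at hre
  rw [Complex.neg_re]
  nlinarith [sq_nonneg ‖w‖]

section

variable {N : ℕ} {s : ℝ}

lemma summable_re_character_mul_rpow (χ : DirichletCharacter ℂ N) (hs : 1 < s) :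
    Summable fun q : Nat.Primes ↦ (χ (q : ℕ)).re * (q : ℝ) ^ (-s) := by
  refine Summable.of_norm_bounded (Nat.Primes.summable_rpow.mpr (neg_lt_neg hs)) fun q ↦ ?_
  have hq : 0 ≤ (q : ℝ) ^ (-s) := by positivity
  rw [norm_mul, norm_of_nonneg hq]
  exact mul_le_of_le_one_left hq ((Complex.abs_re_le_norm _).trans (χ.norm_le_one _))

lemma re_neg_log_one_sub_character_mul_le (χ : DirichletCharacter ℂ N) (hs : 1 < s)
    (q : Nat.Primes) :
    (-Complex.log (1 - χ (q : ℕ) * (q : ℂ) ^ (-(s : ℂ)))).re ≤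
      (χ (q : ℕ)).re * (q : ℝ) ^ (-s) + (q : ℝ) ^ (-(2 : ℝ)) := by
  have hcast : (q : ℂ) ^ (-(s : ℂ)) = ((q : ℝ) ^ (-s) : ℝ) := by
    rw [Complex.ofReal_cpow (Nat.cast_nonneg _), Complex.ofReal_natCast, Complex.ofReal_neg]
  rw [hcast]
  set w : ℂ := χ (q : ℕ) * ((q : ℝ) ^ (-s) : ℝ) with hw
  have hnorm : ‖w‖ ≤ (q : ℝ) ^ (-s) := by
    rw [hw, norm_mul, Complex.norm_of_nonneg (by positivity)]
    exact mul_le_of_le_one_left (by positivity) (χ.norm_le_one _)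
  have hsq : ‖w‖ ^ 2 ≤ (q : ℝ) ^ (-(2 : ℝ)) :=
    calc ‖w‖ ^ 2 ≤ ((q : ℝ) ^ (-s)) ^ 2 := by gcongr
      _ = (q : ℝ) ^ (-(s * 2)) := by rw [← neg_mul, rpow_mul (by positivity), rpow_two]
      _ ≤ (q : ℝ) ^ (-(2 : ℝ)) :=
          rpow_neg_le_rpow_neg (by linarith) (by exact_mod_cast q.2.one_le)
  have hre : w.re = (χ (q : ℕ)).re * (q : ℝ) ^ (-s) := by rw [hw, Complex.re_mul_ofReal]
  rw [← hre]
  exact (re_neg_log_one_sub_le (hnorm.trans (prime_rpow_neg_le_half q.2 hs.le))).trans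
    (by gcongr)

lemma log_norm_LSeries_le (χ : DirichletCharacter ℂ N) (hs : 1 < s) :
    log ‖LSeries (χ ·) s‖ ≤
      ∑' q : Nat.Primes, (χ (q : ℕ)).re * (q : ℝ) ^ (-s) + primeZetaTwo := by
  have hs' : 1 < (s : ℂ).re := hs
  have hlog := DirichletCharacter.summable_neg_log_one_sub_mul_prime_cpow χ hs'
  have hre := summable_re_character_mul_rpow χ hs
  have hsq := Nat.Primes.summable_rpow.mpr (show (-2 : ℝ) < -1 by norm_num)
  rw [← DirichletCharacter.LSeries_eulerProduct_exp_log χ hs', Complex.norm_exp, log_exp,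
    Complex.re_tsum hlog, primeZetaTwo, ← hre.tsum_add hsq]
  exact Summable.tsum_le_tsum (re_neg_log_one_sub_character_mul_le χ hs)
    (Complex.hasSum_re hlog.hasSum).summable (hre.add hsq)

variable [NeZero N]

lemma card_dirichletCharacter : Fintype.card (DirichletCharacter ℂ N) = N.totient := by
  rw [← DirichletCharacter.card_eq_totient_of_hasEnoughRootsOfUnity ℂ N, Nat.card_eq_fintype_card]

theorem sum_log_norm_LSeries_le (hs : 1 < s) :
    ∑ χ : DirichletCharacter ℂ N, log ‖LSeries (χ ·) s‖ ≤
      N.totient * (primeZetaModEqOne N s + primeZetaTwo) :=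
  calc ∑ χ : DirichletCharacter ℂ N, log ‖LSeries (χ ·) s‖
      ≤ ∑ χ : DirichletCharacter ℂ N,
          (∑' q : Nat.Primes, (χ (q : ℕ)).re * (q : ℝ) ^ (-s) + primeZetaTwo) :=
        sum_le_sum fun χ _ ↦ log_norm_LSeries_le χ hs
    _ = ∑' q : Nat.Primes, ∑ χ : DirichletCharacter ℂ N, (χ (q : ℕ)).re * (q : ℝ) ^ (-s) +
          N.totient * primeZetaTwo := by
        rw [sum_add_distrib, sum_const, nsmul_eq_mul, card_univ, card_dirichletCharacter,
          Summable.tsum_finsetSum fun χ _ ↦ summable_re_character_mul_rpow χ hs]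
    _ = N.totient * primeZetaModEqOne N s + N.totient * primeZetaTwo := by
        congr 1
        rw [primeZetaModEqOne, ← tsum_mul_left]
        refine tsum_congr fun q ↦ ?_
        rw [← sum_mul, ← Complex.re_sum, DirichletCharacter.sum_characters_eq]
        split_ifs <;> simp
    _ = N.totient * (primeZetaModEqOne N s + primeZetaTwo) := by ring

end

section

variable {δ : ℝ}

lemma mul_rpow_neg_one_add_le (hδ : 0 ≤ δ) {x : ℝ} (hx : 0 < x) :
    δ * (x + 1) ^ (-(1 + δ)) ≤ x ^ (-δ) - (x + 1) ^ (-δ) := by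
  have hx1 : 0 < x + 1 := by linarith
  have hratio : 1 + δ / (x + 1) ≤ (x / (x + 1)) ^ (-δ) := by
    have hlog : log (x / (x + 1)) ≤ -(x + 1)⁻¹ := by
      refine (log_le_sub_one_of_pos (by positivity)).trans_eq ?_
      field_simp
      ring
    calc 1 + δ / (x + 1) = -(x + 1)⁻¹ * -δ + 1 := by ring
      _ ≤ log (x / (x + 1)) * -δ + 1 := by gcongr ?_ + 1; nlinarith
      _ ≤ exp (log (x / (x + 1)) * -δ) := add_one_le_exp _
      _ = (x / (x + 1)) ^ (-δ) := (rpow_def_of_pos (by positivity) _).symm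
  have hx_eq : x ^ (-δ) = (x + 1) ^ (-δ) * (x / (x + 1)) ^ (-δ) := by
    rw [← mul_rpow hx1.le (by positivity), mul_div_cancel₀ _ hx1.ne']
  have hsucc : (x + 1) ^ (-(1 + δ)) = (x + 1) ^ (-δ) / (x + 1) := by
    rw [neg_add, rpow_add hx1, rpow_neg_one, div_eq_mul_inv, mul_comm]
  calc δ * (x + 1) ^ (-(1 + δ)) = (x + 1) ^ (-δ) * (1 + δ / (x + 1)) - (x + 1) ^ (-δ) := by
        rw [hsucc]; ring
    _ ≤ (x + 1) ^ (-δ) * (x / (x + 1)) ^ (-δ) - (x + 1) ^ (-δ) := by gcongr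
    _ = x ^ (-δ) - (x + 1) ^ (-δ) := by rw [← hx_eq]

lemma sum_rpow_neg_one_add_le (hδ : 0 < δ) {M : ℕ} (hM : M ≠ 0) {S : Finset ℕ}
    (hS : ∀ n ∈ S, M < n) : ∑ n ∈ S, (n : ℝ) ^ (-(1 + δ)) ≤ (M : ℝ) ^ (-δ) / δ := by
  have htelescope (X : ℕ) (hX : M ≤ X) :
      δ * ∑ n ∈ Ioc M X, (n : ℝ) ^ (-(1 + δ)) ≤ (M : ℝ) ^ (-δ) - (X : ℝ) ^ (-δ) := by
    induction X, hX using Nat.le_induction with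
    | base => simp
    | succ X hX ih =>
      have hstep := mul_rpow_neg_one_add_le hδ.le (x := X) (mod_cast hM.bot_lt.trans_le hX)
      rw [sum_Ioc_succ_top hX, mul_add]
      push_cast
      linarith
  have hsub : S ⊆ Ioc M (M + S.sup id) := fun n hn ↦
    mem_Ioc.mpr ⟨hS n hn, (le_sup (f := id) hn).trans (Nat.le_add_left _ _)⟩
  rw [le_div_iff₀' hδ]
  calc δ * ∑ n ∈ S, (n : ℝ) ^ (-(1 + δ))
      ≤ δ * ∑ n ∈ Ioc M (M + S.sup id), (n : ℝ) ^ (-(1 + δ)) := by gcongr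
    _ ≤ (M : ℝ) ^ (-δ) - ((M + S.sup id : ℕ) : ℝ) ^ (-δ) := htelescope _ (Nat.le_add_right _ _)
    _ ≤ (M : ℝ) ^ (-δ) := sub_le_self _ (by positivity)

lemma primeZetaModEqOne_le (N : ℕ) (hδ : 0 < δ) {M : ℕ} (hM : M ≠ 0) :
    primeZetaModEqOne N (1 + δ) ≤ recipSumModEqOne N M + (M : ℝ) ^ (-δ) / δ := by
  refine Real.tsum_le_of_sum_le (fun q ↦ by split_ifs <;> positivity) fun S ↦ ?_
  set T : Finset ℕ := 
    image (fun q : Nat.Primes ↦ (q : ℕ)) (S.filter fun q ↦ ((q : ℕ) : ZMod N) = 1) with hT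
  have hmem (q : ℕ) (hq : q ∈ T) : q.Prime ∧ q ≡ 1 [MOD N] := by
    obtain ⟨r, hr, rfl⟩ := mem_image.mp hq
    refine ⟨r.2, (ZMod.natCast_eq_natCast_iff _ _ _).mp ?_⟩
    rw [Nat.cast_one]
    exact (mem_filter.mp hr).2
  have hsum : ∑ q ∈ S, (if ((q : ℕ) : ZMod N) = 1 then (q : ℝ) ^ (-(1 + δ)) else 0) =
      ∑ q ∈ T, (q : ℝ) ^ (-(1 + δ)) := by
    rw [hT, sum_image fun _ _ _ _ ↦ Nat.Primes.coe_nat_inj _ _ |>.mp, sum_filter]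
  rw [hsum, ← sum_filter_add_sum_filter_not T (· ≤ M)]
  have hsub : T.filter (· ≤ M) ⊆ primesModEqOne N M := fun q hq ↦ by
    obtain ⟨hqT, hqM⟩ := mem_filter.mp hq
    exact mem_primesModEqOne.mpr ⟨⟨hqM, (hmem q hqT).1⟩, (hmem q hqT).2⟩
  gcongr ?_ + ?_
  · calc ∑ q ∈ T.filter (· ≤ M), (q : ℝ) ^ (-(1 + δ))
        ≤ ∑ q ∈ primesModEqOne N M, (q : ℝ) ^ (-(1 + δ)) :=
          sum_le_sum_of_subset_of_nonneg hsub fun _ _ _ ↦ by positivity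
      _ ≤ recipSumModEqOne N M := sum_le_sum fun q hq ↦
          natCast_rpow_neg_le_inv (mem_primesModEqOne.mp hq).1.2.one_le (by linarith)
  · exact sum_rpow_neg_one_add_le hδ hM fun q hq ↦ not_le.mp (mem_filter.mp hq).2

end

lemma exists_forall_log_inv_le : ∃ A : ℝ, 1 ≤ A ∧ ∀ (p : ℕ) (δ : ℝ) (M : ℕ), p.Prime → 0 < δ →
    M ≠ 0 → δ * (A * (p : ℝ) ^ 5) ≤ 1 → log δ⁻¹ - log 4 ≤
      (p - 1) * (recipSumModEqOne p M + (M : ℝ) ^ (-δ) / δ + primeZetaTwo + log A + 4 * log p) := by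
  classical
  obtain ⟨A, hA, hL⟩ := exists_forall_le_norm_LSeries
  refine ⟨A, hA, fun p δ M hp hδ hM hδA ↦ ?_⟩
  have : Fact p.Prime := ⟨hp⟩
  obtain ⟨hL_one, hL_ne_one⟩ := hL p δ hδ hδA
  have hp_pos : (0 : ℝ) < p := mod_cast hp.pos
  have hlog_one : log δ⁻¹ - log 4 ≤
      log ‖LSeries ((1 : DirichletCharacter ℂ p) ·) (1 + δ : ℝ)‖ := by
    rw [← log_div (by positivity) (by norm_num)]
    refine log_le_log (by positivity) ?_
    rw [inv_eq_one_div, div_div, div_le_iff₀ (by positivity)]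
    linarith
  have hlog (χ : DirichletCharacter ℂ p) : (if χ = 1 then log δ⁻¹ - log 4 else 0) -
      (log A + 4 * log p) ≤ log ‖LSeries (χ ·) (1 + δ : ℝ)‖ := by
    split_ifs with hχ
    · rw [hχ]
      linarith [log_nonneg hA, log_natCast_nonneg p]
    · have hχ_log := log_le_log (by positivity) (hL_ne_one χ hχ)
      rw [one_div, log_inv, log_mul (by positivity) (by positivity), log_pow,
        Nat.cast_ofNat] at hχ_log
      linarith
  have hcard : (p.totient : ℝ) = p - 1 := by
    rw [Nat.totient_prime hp, Nat.cast_sub hp.one_le, Nat.cast_one]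
  have hsum := (sum_le_sum fun χ _ ↦ hlog χ).trans
    (sum_log_norm_LSeries_le (N := p) (lt_add_of_pos_right 1 hδ))
  rw [sum_sub_distrib, sum_ite_eq' univ (1 : DirichletCharacter ℂ p), if_pos (mem_univ _),
    sum_const, nsmul_eq_mul, card_univ, card_dirichletCharacter, hcard] at hsum
  have hp_one : (0 : ℝ) ≤ p - 1 := sub_nonneg.mpr (mod_cast hp.one_le)
  linarith [mul_le_mul_of_nonneg_left (primeZetaModEqOne_le p hδ hM) hp_one]

lemma eventually_log_two_mul_add_log_four_le :
    ∀ᶠ u : ℝ in atTop, log (2 * u) + log 4 ≤ u / 2 := by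
  filter_upwards [isLittleO_log_id_atTop.bound (show (0 : ℝ) < 1 / 4 by norm_num),
    eventually_ge_atTop (4 * (log 2 + log 4)), eventually_ge_atTop 1] with u hlog hu hu_one
  rw [id, norm_of_nonneg (log_nonneg hu_one), norm_of_nonneg (zero_le_one.trans hu_one)] at hlog
  rw [log_mul two_ne_zero (by linarith)]
  linarith

lemma eventually_mul_pow_le_exp (c : ℝ) (k : ℕ) : ∀ᶠ u : ℝ in atTop, c * u ^ k ≤ exp u := by
  filter_upwards [((isLittleO_pow_exp_atTop (n := k)).const_mul_left c).bound one_pos] with u hu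
  rw [one_mul, norm_of_nonneg (exp_nonneg u)] at hu
  exact (le_norm_self _).trans hu

lemma rpow_neg_div_le_one {x : ℝ} (hx : 1 < x) (hu : 1 ≤ log (log x)) :
    x ^ (-(2 * log (log x) / log x)) / (2 * log (log x) / log x) ≤ 1 := by
  have hlog : 0 < log x := log_pos hx
  have hlog_one : 1 ≤ log x := (log_nonneg_iff hlog).mp (zero_le_one.trans hu)
  have hrpow : x ^ (-(2 * log (log x) / log x)) = (log x ^ 2)⁻¹ := by
    rw [rpow_def_of_pos (by linarith), mul_neg, mul_div_cancel₀ _ hlog.ne', exp_neg,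
      ← exp_log (pow_pos hlog 2), log_pow, Nat.cast_ofNat]
  rw [div_le_one (by positivity), hrpow]
  calc (log x ^ 2)⁻¹ ≤ (log x)⁻¹ := inv_anti₀ hlog (le_self_pow₀ hlog_one two_ne_zero)
    _ = 1 / log x := inv_eq_one_div _
    _ ≤ 2 * log (log x) / log x := by gcongr; linarith

theorem exists_eventually_le_recipSumModEqOne : ∃ C : ℝ, 0 < C ∧ ∀ᶠ M : ℕ in atTop,
    ∀ p : ℕ, p.Prime → p ≤ log (log M) →
      log (log M) / (2 * p) - C * log p ≤ recipSumModEqOne p M := by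
  obtain ⟨A, hA, hA_le⟩ := exists_forall_log_inv_le
  have hlogA := log_nonneg hA
  have hzeta := primeZetaTwo_nonneg
  have hloglog : Tendsto (fun M : ℕ ↦ log (log M)) atTop atTop :=
    tendsto_log_atTop.comp (tendsto_log_atTop.comp tendsto_natCast_atTop_atTop)
  refine ⟨4 + 2 * (log A + primeZetaTwo + 1), by positivity, ?_⟩
  filter_upwards [hloglog.eventually eventually_log_two_mul_add_log_four_le,
    hloglog.eventually (eventually_mul_pow_le_exp (2 * A) 6),
    hloglog.eventually (eventually_ge_atTop 1), eventually_ge_atTop 3]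
    with M hlog_le hexp_le hu_one hM p hp hpu
  have hM_one : (1 : ℝ) < M := mod_cast (by lia : 1 < M)
  have hlogM := log_pos hM_one
  have htail := rpow_neg_div_le_one hM_one hu_one
  set u := log (log M) with hu
  have hp_two : (2 : ℝ) ≤ p := mod_cast hp.two_le
  -- With this `δ` the tail `M ^ (-δ) / δ` is bounded.
  set δ := 2 * u / log M with hδ
  have hδA : δ * (A * (p : ℝ) ^ 5) ≤ 1 := by
    rw [exp_log hlogM] at hexp_le
    rw [hδ, div_mul_eq_mul_div, div_le_one hlogM]
    calc 2 * u * (A * (p : ℝ) ^ 5) ≤ 2 * u * (A * u ^ 5) := by gcongr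
      _ = 2 * A * u ^ 6 := by ring
      _ ≤ log M := hexp_le
  have hlog_inv : u / 2 ≤ log δ⁻¹ - log 4 := by
    rw [hδ, inv_div, log_div hlogM.ne' (by positivity), ← hu]
    linarith
  have hS : u / 2 / (p - 1) ≤
      recipSumModEqOne p M + 1 + primeZetaTwo + log A + 4 * log p := by
    rw [div_le_iff₀' (by linarith)]
    refine (hlog_inv.trans (hA_le p δ M hp (by positivity) (by lia) hδA)).trans ?_
    gcongr
    linarith
  have hdiv : u / (2 * p) ≤ u / 2 / (p - 1) := by
    rw [div_div]
    exact div_le_div_of_nonneg_left (by linarith) (by linarith) (by linarith)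
  have hlog_p : 1 / 2 ≤ log p := by
    linarith [log_le_log two_pos hp_two, log_two_gt_d9]
  have hconst := mul_le_mul_of_nonneg_left hlog_p (by positivity : 0 ≤ log A + primeZetaTwo + 1)
  linarith

/-! ### Sifted integers -/

section Turan

/-- The number of elements of `Q` dividing `m`, as a real number. -/
def countDvd (Q : Finset ℕ) (m : ℕ) : ℝ :=
  ∑ q ∈ Q, if q ∣ m then 1 else 0

/-- The positive integers up to `N` divisible by no element of `P`. -/
def sifted (P : Finset ℕ) (N : ℕ) : Finset ℕ :=
  {n ∈ Ioc 0 N | ∀ p ∈ P, ¬ p ∣ n}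

lemma mem_sifted {P : Finset ℕ} {N n : ℕ} :
    n ∈ sifted P N ↔ (0 < n ∧ n ≤ N) ∧ ∀ p ∈ P, ¬ p ∣ n := by
  rw [sifted, mem_filter, mem_Ioc]

variable {Q : Finset ℕ} {M : ℕ}

lemma sum_ite_dvd (M d : ℕ) : ∑ m ∈ Ioc 0 M, (if d ∣ m then (1 : ℝ) else 0) = (M / d : ℕ) := by
  rw [sum_boole, Nat.Ioc_filter_dvd_card_eq_div]

lemma le_sum_countDvd (Q : Finset ℕ) (M : ℕ) :
    M * ∑ q ∈ Q, (q : ℝ)⁻¹ - #Q ≤ ∑ m ∈ Ioc 0 M, countDvd Q m :=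
  calc M * ∑ q ∈ Q, (q : ℝ)⁻¹ - #Q = ∑ q ∈ Q, ((M : ℝ) / q - 1) := by
        rw [sum_sub_distrib, mul_sum, card_eq_sum_ones, Nat.cast_sum, Nat.cast_one]
        simp only [div_eq_mul_inv]
    _ ≤ ∑ q ∈ Q, ((M / q : ℕ) : ℝ) := sum_le_sum fun q _ ↦ by
        have := Nat.lt_floor_add_one ((M : ℝ) / q)
        rw [Nat.floor_div_natCast, Nat.floor_natCast] at this
        linarith
    _ = ∑ m ∈ Ioc 0 M, countDvd Q m := by
        simp only [countDvd]
        rw [sum_comm]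
        simp only [sum_ite_dvd]

lemma sum_ite_dvd_and_dvd_le (hQ : (Q : Set ℕ).Pairwise Nat.Coprime) {q r : ℕ} (hq : q ∈ Q)
    (hr : r ∈ Q) : ∑ m ∈ Ioc 0 M, (if q ∣ m ∧ r ∣ m then (1 : ℝ) else 0) ≤
      M * ((q : ℝ)⁻¹ * (r : ℝ)⁻¹) + if q = r then M * (q : ℝ)⁻¹ else 0 := by
  rcases eq_or_ne q r with rfl | hne
  · simp only [and_self, if_true]
    rw [sum_ite_dvd, ← div_eq_mul_inv (M : ℝ) (q : ℝ)]
    exact Nat.cast_div_le.trans (le_add_of_nonneg_left (by positivity))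
  · have hdvd (m : ℕ) : q ∣ m ∧ r ∣ m ↔ q * r ∣ m := 
      ⟨fun h ↦ Nat.Coprime.mul_dvd_of_dvd_of_dvd (hQ hq hr hne) h.1 h.2,
        fun h ↦ ⟨dvd_of_mul_right_dvd h, dvd_of_mul_left_dvd h⟩⟩
    simp only [hdvd]
    rw [sum_ite_dvd, if_neg hne, add_zero, ← mul_inv, ← Nat.cast_mul, ← div_eq_mul_inv]
    exact Nat.cast_div_le

lemma sum_countDvd_sq_le (hQ : (Q : Set ℕ).Pairwise Nat.Coprime) (M : ℕ) :
    ∑ m ∈ Ioc 0 M, countDvd Q m ^ 2 ≤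
      M * (∑ q ∈ Q, (q : ℝ)⁻¹) ^ 2 + M * ∑ q ∈ Q, (q : ℝ)⁻¹ := by
  have hsq (m : ℕ) : countDvd Q m ^ 2 =
      ∑ q ∈ Q, ∑ r ∈ Q, if q ∣ m ∧ r ∣ m then (1 : ℝ) else 0 := by
    rw [countDvd, sq, sum_mul_sum]
    simp only [ite_zero_mul_ite_zero, mul_one]
  calc ∑ m ∈ Ioc 0 M, countDvd Q m ^ 2
      = ∑ q ∈ Q, ∑ r ∈ Q, ∑ m ∈ Ioc 0 M, if q ∣ m ∧ r ∣ m then (1 : ℝ) else 0 := by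
        simp only [hsq]
        rw [sum_comm]
        exact sum_congr rfl fun q _ ↦ sum_comm
    _ ≤ ∑ q ∈ Q, ∑ r ∈ Q,
          (M * ((q : ℝ)⁻¹ * (r : ℝ)⁻¹) + if q = r then M * (q : ℝ)⁻¹ else 0) :=
        sum_le_sum fun q hq ↦ sum_le_sum fun r hr ↦ sum_ite_dvd_and_dvd_le hQ hq hr
    _ = M * (∑ q ∈ Q, (q : ℝ)⁻¹) ^ 2 + M * ∑ q ∈ Q, (q : ℝ)⁻¹ := by
        simp only [sum_add_distrib]
        congr 1
        · rw [sq, sum_mul_sum]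
          simp only [mul_sum]
        · rw [mul_sum]
          exact sum_congr rfl fun q hq ↦ by rw [sum_ite_eq, if_pos hq]

/-- Turán's second moment method: a sifted integer has `countDvd Q m = 0`, far from its mean. -/
theorem card_sifted_mul_sum_inv_le (hQ : (Q : Set ℕ).Pairwise Nat.Coprime) (M : ℕ) :
    #(sifted Q M) * ∑ q ∈ Q, (q : ℝ)⁻¹ ≤ M + 2 * #Q := by
  have hmean := le_sum_countDvd Q M
  have hsq := sum_countDvd_sq_le hQ M
  have hE_nonneg : 0 ≤ ∑ q ∈ Q, (q : ℝ)⁻¹ := by positivity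
  set E := ∑ q ∈ Q, (q : ℝ)⁻¹
  rcases hE_nonneg.eq_or_lt with hE | hE
  · rw [← hE, mul_zero]
    positivity
  have hvar : ∑ m ∈ Ioc 0 M, (countDvd Q m - E) ^ 2 ≤ E * (M + 2 * #Q) :=
    calc ∑ m ∈ Ioc 0 M, (countDvd Q m - E) ^ 2
        = ∑ m ∈ Ioc 0 M, countDvd Q m ^ 2 - 2 * E * ∑ m ∈ Ioc 0 M, countDvd Q m + M * E ^ 2 := by
          simp only [sub_sq, sum_add_distrib, sum_sub_distrib, ← sum_mul, ← mul_sum, sum_const,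
            Nat.card_Ioc, tsub_zero, nsmul_eq_mul]
          ring
      _ ≤ M * E ^ 2 + M * E - 2 * E * (M * E - #Q) + M * E ^ 2 := by gcongr
      _ = E * (M + 2 * #Q) := by ring
  have hsifted : #(sifted Q M) * E ^ 2 ≤ ∑ m ∈ Ioc 0 M, (countDvd Q m - E) ^ 2 :=
    calc #(sifted Q M) * E ^ 2 = ∑ m ∈ sifted Q M, (countDvd Q m - E) ^ 2 := by
          rw [← nsmul_eq_mul, ← sum_const]
          refine sum_congr rfl fun m hm ↦ ?_
          have hzero : countDvd Q m = 0 :=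
            sum_eq_zero fun q hq ↦ if_neg ((mem_sifted.mp hm).2 q hq)
          rw [hzero, zero_sub, neg_sq]
      _ ≤ ∑ m ∈ Ioc 0 M, (countDvd Q m - E) ^ 2 :=
          sum_le_sum_of_subset_of_nonneg (filter_subset _ _) fun _ _ _ ↦ sq_nonneg _
  refine le_of_mul_le_mul_left ?_ hE
  linarith

end Turan

section siftedPowSum

/-- The sum of the `k`-th powers of the positive integers `n ≤ x` divisible by no element of
`P`. -/
noncomputable def siftedPowSum (k : ℕ) (P : Finset ℕ) (x : ℝ) : ℝ :=
  ∑ n ∈ sifted P ⌊x⌋₊, (n : ℝ) ^ k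

lemma pow_div_le_sum_pow (k N : ℕ) :
    (N : ℝ) ^ (k + 1) / (k + 1) ≤ ∑ n ∈ Ioc 0 N, (n : ℝ) ^ k :=
  calc (N : ℝ) ^ (k + 1) / (k + 1) = ∫ t in ((0 : ℕ) : ℝ)..N, t ^ k := by simp [integral_pow]
    _ ≤ ∑ n ∈ Ico 0 N, ((n + 1 : ℕ) : ℝ) ^ k :=
        (pow_left_monotoneOn.mono fun t ht ↦ by simpa using ht.1).integral_le_sum_Ico N.zero_le
    _ = ∑ n ∈ Ioc 0 N, (n : ℝ) ^ k := by
        rw [sum_Ico_add' (fun n : ℕ ↦ (n : ℝ) ^ k), Ico_add_one_add_one_eq_Ioc]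

lemma sum_pow_le (k N : ℕ) :
    ∑ n ∈ Ioc 0 N, (n : ℝ) ^ k ≤ (N : ℝ) ^ (k + 1) / (k + 1) + (N : ℝ) ^ k :=
  calc ∑ n ∈ Ioc 0 N, (n : ℝ) ^ k ≤ ∑ n ∈ Ico 0 (N + 1), (n : ℝ) ^ k :=
        sum_le_sum_of_subset_of_nonneg (by grind) fun _ _ _ ↦ by positivity
    _ = ∑ n ∈ Ico 0 N, (n : ℝ) ^ k + (N : ℝ) ^ k := sum_Ico_succ_top N.zero_le _
    _ ≤ (∫ t in ((0 : ℕ) : ℝ)..N, t ^ k) + (N : ℝ) ^ k := by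
        gcongr
        exact (pow_left_monotoneOn.mono fun t ht ↦ by simpa using ht.1).sum_le_integral_Ico
          N.zero_le
    _ = (N : ℝ) ^ (k + 1) / (k + 1) + (N : ℝ) ^ k := by simp [integral_pow]

lemma abs_siftedPowSum_empty_sub_le (k : ℕ) {x : ℝ} (hx : 0 ≤ x) :
    |siftedPowSum k ∅ x - x ^ (k + 1) / (k + 1)| ≤ x ^ k := by
  have hsum : siftedPowSum k ∅ x = ∑ n ∈ Ioc 0 ⌊x⌋₊, (n : ℝ) ^ k := by
    simp [siftedPowSum, sifted]
  have hfloor := Nat.floor_le hx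
  have hpow_le : x ^ (k + 1) / (k + 1) ≤ (⌊x⌋₊ : ℝ) ^ (k + 1) / (k + 1) + x ^ k := by
    rw [div_le_iff₀ (by positivity), add_mul, div_mul_cancel₀ _ (by positivity)]
    have hdiff := (le_abs_self _).trans (abs_pow_sub_pow_le x ⌊x⌋₊ (k + 1))
    rw [abs_of_nonneg (sub_nonneg.mpr hfloor), abs_of_nonneg hx, Nat.abs_cast,
      max_eq_left hfloor, Nat.cast_succ, Nat.add_sub_cancel] at hdiff
    calc x ^ (k + 1) ≤ ⌊x⌋₊ ^ (k + 1) + (x - ⌊x⌋₊) * (k + 1) * x ^ k := by linarith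
      _ ≤ ⌊x⌋₊ ^ (k + 1) + 1 * (k + 1) * x ^ k := by
          gcongr
          linarith [Nat.lt_floor_add_one x]
      _ = ⌊x⌋₊ ^ (k + 1) + x ^ k * (k + 1) := by ring
  rw [hsum, abs_sub_le_iff]
  constructor
  · have := sum_pow_le k ⌊x⌋₊
    have : (⌊x⌋₊ : ℝ) ^ (k + 1) / (k + 1) ≤ x ^ (k + 1) / (k + 1) := by gcongr
    have : (⌊x⌋₊ : ℝ) ^ k ≤ x ^ k := by gcongr
    linarith
  · linarith [pow_div_le_sum_pow k ⌊x⌋₊]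

lemma siftedPowSum_insert (k : ℕ) {P : Finset ℕ} {p : ℕ} (hp : 0 < p)
    (hP : ∀ q ∈ P, q.Coprime p) (x : ℝ) :
    siftedPowSum k (insert p P) x =
      siftedPowSum k P x - (p : ℝ) ^ k * siftedPowSum k P (x / p) := by
  have hnot_dvd : {n ∈ sifted P ⌊x⌋₊ | ¬ p ∣ n} = sifted (insert p P) ⌊x⌋₊ := by
    ext n
    simp only [mem_filter, mem_sifted, forall_mem_insert]
    tauto
  have hdvd : {n ∈ sifted P ⌊x⌋₊ | p ∣ n} = (sifted P ⌊x / p⌋₊).image (p * ·) := by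
    ext n
    simp only [mem_filter, mem_image, mem_sifted, Nat.floor_div_natCast, Nat.le_div_iff_mul_le hp]
    constructor
    · rintro ⟨⟨⟨hn, hnx⟩, hnP⟩, m, rfl⟩
      exact ⟨m, ⟨⟨Nat.pos_of_mul_pos_left hn, by rwa [mul_comm]⟩,
        fun q hq h ↦ hnP q hq (h.mul_left p)⟩, rfl⟩
    · rintro ⟨m, ⟨⟨hm, hmx⟩, hmP⟩, rfl⟩
      exact ⟨⟨⟨Nat.mul_pos hp hm, by rwa [mul_comm]⟩,
        fun q hq h ↦ hmP q hq ((hP q hq).dvd_of_dvd_mul_left h)⟩, dvd_mul_right p m⟩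
  rw [eq_sub_iff_add_eq', siftedPowSum, siftedPowSum, siftedPowSum,
    ← sum_filter_add_sum_filter_not (sifted P ⌊x⌋₊) (p ∣ ·), hnot_dvd, hdvd,
    sum_image fun a _ b _ ↦ Nat.eq_of_mul_eq_mul_left hp, mul_sum]
  simp only [Nat.cast_mul, mul_pow]

theorem abs_siftedPowSum_sub_le (k : ℕ) {P : Finset ℕ} (hP : ∀ p ∈ P, p.Prime) {x : ℝ}
    (hx : 0 ≤ x) :
    |siftedPowSum k P x - x ^ (k + 1) / (k + 1) * ∏ p ∈ P, (1 - (p : ℝ)⁻¹)| ≤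
      2 ^ #P * x ^ k := by
  induction P using Finset.induction_on generalizing x with
  | empty => simpa using abs_siftedPowSum_empty_sub_le k hx
  | insert p P hpP ih =>
    obtain ⟨hp, hP⟩ := (forall_mem_insert _ _ _).mp hP
    have hp_pos : (0 : ℝ) < p := mod_cast hp.pos
    have hcoprime (q : ℕ) (hq : q ∈ P) : q.Coprime p :=
      (Nat.coprime_primes (hP q hq) hp).mpr fun h ↦ hpP (h ▸ hq)
    have hx_le := ih hP hx
    have hxp_le := ih hP (div_nonneg hx hp_pos.le)
    set W := ∏ q ∈ P, (1 - (q : ℝ)⁻¹)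
    rw [siftedPowSum_insert k hp.pos hcoprime, prod_insert hpP, card_insert_of_notMem hpP]
    calc |siftedPowSum k P x - (p : ℝ) ^ k * siftedPowSum k P (x / p) -
          x ^ (k + 1) / (k + 1) * ((1 - (p : ℝ)⁻¹) * W)|
        = |(siftedPowSum k P x - x ^ (k + 1) / (k + 1) * W) -
            (p : ℝ) ^ k * (siftedPowSum k P (x / p) - (x / p) ^ (k + 1) / (k + 1) * W)| := by
          congr 1
          rw [div_pow]
          field_simp
          ring
      _ ≤ |siftedPowSum k P x - x ^ (k + 1) / (k + 1) * W| +
            (p : ℝ) ^ k * |siftedPowSum k P (x / p) - (x / p) ^ (k + 1) / (k + 1) * W| := by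
          refine (abs_sub _ _).trans_eq ?_
          rw [abs_mul, abs_of_pos (pow_pos hp_pos k)]
      _ ≤ 2 ^ #P * x ^ k + (p : ℝ) ^ k * (2 ^ #P * (x / p) ^ k) := by gcongr
      _ = 2 ^ (#P + 1) * x ^ k := by
          rw [div_pow]
          field_simp
          ring

end siftedPowSum

/-! ### Cyclic numbers and sifted integers -/

lemma not_modEq_one_of_isCyclicNum {n p q : ℕ} (hn : IsCyclicNum n) (hp : p.Prime) (hpn : p ∣ n)
    (hq : q.Prime) (hqn : q ∣ n) : ¬ q ≡ 1 [MOD p] := fun hqp ↦ by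
  have hp_sub : p ∣ q - 1 := (Nat.modEq_iff_dvd' hq.one_le).mp hqp.symm
  rw [← Nat.totient_prime hq] at hp_sub
  have hp_gcd := Nat.dvd_gcd hpn (hp_sub.trans (Nat.totient_dvd_of_dvd hqn))
  rw [hn.2] at hp_gcd
  exact hp.not_dvd_one hp_gcd

lemma exists_prime_sq_dvd_or_mul_dvd_of_not_isCyclicNum {n : ℕ} (hn : 0 < n)
    (hcyc : ¬ IsCyclicNum n) : ∃ r, r.Prime ∧
      (r ^ 2 ∣ n ∨ ∃ q, q.Prime ∧ q ≡ 1 [MOD r] ∧ r * q ∣ n) := by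
  obtain ⟨r, hr, hr_gcd⟩ := Nat.exists_prime_and_dvd fun h ↦ hcyc ⟨hn, h⟩
  have hrn := hr_gcd.trans (Nat.gcd_dvd_left _ _)
  have hr_tot := hr_gcd.trans (Nat.gcd_dvd_right _ _)
  rw [Nat.totient_eq_prod_factorization hn.ne', Finsupp.prod,
    (Nat.prime_iff.mp hr).dvd_finsetProd_iff] at hr_tot
  obtain ⟨q, hq_mem, hrq⟩ := hr_tot
  rw [Nat.support_factorization] at hq_mem
  have hq := Nat.prime_of_mem_primeFactors hq_mem
  refine ⟨r, hr, (hr.dvd_mul.mp hrq).imp (fun hpow ↦ ?_) fun hsub ↦ ?_⟩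
  · have hexp : n.factorization q - 1 ≠ 0 := fun h0 ↦ hr.not_dvd_one (by simpa [h0] using hpow)
    obtain rfl := (Nat.prime_dvd_prime_iff_eq hr hq).mp (hr.dvd_of_dvd_pow hpow)
    exact (pow_dvd_pow r (by lia)).trans (Nat.ordProj_dvd n r)
  · refine ⟨q, hq, ((Nat.modEq_iff_dvd' hq.one_le).mpr hsub).symm, ?_⟩
    have hne : r ≠ q := by
      rintro rfl
      exact (Nat.le_of_dvd (by have := hr.two_le; lia) hsub).not_gt (Nat.sub_lt hr.pos one_pos)
    exact ((Nat.coprime_primes hr hq).mpr hne).mul_dvd_of_dvd_of_dvd hrn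
      (Nat.dvd_of_mem_primeFactors hq_mem)

lemma sum_pow_le_of_subset_union_biUnion {A B R : Finset ℕ} {C : ℕ → Finset ℕ}
    (hABC : A ⊆ B ∪ R.biUnion C) {x : ℝ} (hx : 0 ≤ x) (hA : ∀ n ∈ A, (n : ℝ) ≤ x) (k : ℕ) :
    ∑ n ∈ A, (n : ℝ) ^ k ≤ ∑ n ∈ B, (n : ℝ) ^ k + x ^ k * ∑ r ∈ R, (#(C r) : ℝ) := by
  have hsdiff : A \ B ⊆ R.biUnion C := fun n hn ↦
    (mem_union.mp (hABC (mem_sdiff.mp hn).1)).resolve_left (mem_sdiff.mp hn).2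
  have hcard : (#(A \ B) : ℝ) ≤ ∑ r ∈ R, (#(C r) : ℝ) :=
    mod_cast (card_le_card hsdiff).trans card_biUnion_le
  calc ∑ n ∈ A, (n : ℝ) ^ k
      = ∑ n ∈ A ∩ B, (n : ℝ) ^ k + ∑ n ∈ A \ B, (n : ℝ) ^ k := (sum_inter_add_sum_sdiff A B _).symm
    _ ≤ ∑ n ∈ B, (n : ℝ) ^ k + ∑ _n ∈ A \ B, x ^ k := by
        gcongr with n hn
        · exact inter_subset_right
        · exact hA n (mem_sdiff.mp hn).1
    _ = ∑ n ∈ B, (n : ℝ) ^ k + x ^ k * #(A \ B) := by rw [sum_const, nsmul_eq_mul, mul_comm]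
    _ ≤ ∑ n ∈ B, (n : ℝ) ^ k + x ^ k * ∑ r ∈ R, (#(C r) : ℝ) := by gcongr

lemma card_filter_dvd_and_isCyclicNum_le {p N : ℕ} (hp : p.Prime) {a : ℝ} (ha : 0 < a)
    (hap : a / p ≤ recipSumModEqOne p (N / p)) :
    (#{n ∈ range (N + 1) | p ∣ n ∧ IsCyclicNum n} : ℝ) ≤ 3 * N / a := by
  set B := {n ∈ range (N + 1) | p ∣ n ∧ IsCyclicNum n}
  set Q := primesModEqOne p (N / p)
  have hp_pos : (0 : ℝ) < p := mod_cast hp.pos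
  have hQ_prime (q : ℕ) (hq : q ∈ Q) : q.Prime := (mem_primesModEqOne.mp hq).1.2
  have hQ_coprime : (Q : Set ℕ).Pairwise Nat.Coprime := fun q hq r hr hqr ↦
    (Nat.coprime_primes (hQ_prime q hq) (hQ_prime r hr)).mpr hqr
  have hB_sub : B ⊆ (sifted Q (N / p)).image (p * ·) := fun n hn ↦ by
    obtain ⟨hnN, ⟨m, rfl⟩, hcyc⟩ := mem_filter.mp hn
    refine mem_image.mpr ⟨m, mem_sifted.mpr ⟨⟨Nat.pos_of_mul_pos_left hcyc.1, ?_⟩, ?_⟩, rfl⟩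
    · rw [Nat.le_div_iff_mul_le hp.pos, mul_comm]
      exact mem_range_succ_iff.mp hnN
    · exact fun q hq hqm ↦ not_modEq_one_of_isCyclicNum hcyc hp (dvd_mul_right p m)
        (hQ_prime q hq) (hqm.mul_left p) (mem_primesModEqOne.mp hq).2
  have hB_card : (#B : ℝ) ≤ #(sifted Q (N / p)) :=
    mod_cast (card_le_card hB_sub).trans card_image_le
  have hQ_card : #Q ≤ N / p := by
    have hQ_sub : Q ⊆ Ioc 0 (N / p) := fun q hq ↦
      mem_Ioc.mpr ⟨(hQ_prime q hq).pos, (mem_primesModEqOne.mp hq).1.1⟩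
    simpa using card_le_card hQ_sub
  have hmul : #B * (a / p) ≤ 3 * (N / p) :=
    calc #B * (a / p) ≤ #(sifted Q (N / p)) * recipSumModEqOne p (N / p) := by gcongr
      _ ≤ (N / p : ℕ) + 2 * #Q := card_sifted_mul_sum_inv_le hQ_coprime _
      _ ≤ (N / p : ℕ) + 2 * (N / p : ℕ) := by gcongr
      _ = 3 * (N / p : ℕ) := by ring
      _ ≤ 3 * (N / p) := by gcongr; exact Nat.cast_div_le
  rw [le_div_iff₀ ha]
  field_simp at hmul
  linarith

theorem cyclicPowSum_le_siftedPowSum_add (k : ℕ) {P : Finset ℕ} (hP : ∀ p ∈ P, p.Prime)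
    {x a : ℝ} (hx : 0 ≤ x) (ha : 0 < a)
    (haP : ∀ p ∈ P, a / p ≤ recipSumModEqOne p (⌊x⌋₊ / p)) :
    cyclicPowSum k x ≤ siftedPowSum k P x + 3 * x ^ (k + 1) / a * #P := by
  have hsub : {n ∈ range (⌊x⌋₊ + 1) | IsCyclicNum n} ⊆ sifted P ⌊x⌋₊ ∪
      P.biUnion fun p ↦ {n ∈ range (⌊x⌋₊ + 1) | p ∣ n ∧ IsCyclicNum n} := fun n hn ↦ by
    obtain ⟨hn_range, hcyc⟩ := mem_filter.mp hn
    by_cases h : ∀ p ∈ P, ¬ p ∣ n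
    · exact mem_union_left _ (mem_sifted.mpr ⟨⟨hcyc.1, mem_range_succ_iff.mp hn_range⟩, h⟩)
    · push Not at h
      obtain ⟨p, hpP, hpn⟩ := h
      exact mem_union_right _ (mem_biUnion.mpr ⟨p, hpP, mem_filter.mpr ⟨hn_range, hpn, hcyc⟩⟩)
  have hle (n : ℕ) (hn : n ∈ {n ∈ range (⌊x⌋₊ + 1) | IsCyclicNum n}) : (n : ℝ) ≤ x :=
    (Nat.le_floor_iff hx).mp (mem_range_succ_iff.mp (mem_filter.mp hn).1)
  calc cyclicPowSum k x
      ≤ siftedPowSum k P x + x ^ k *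
          ∑ p ∈ P, (#{n ∈ range (⌊x⌋₊ + 1) | p ∣ n ∧ IsCyclicNum n} : ℝ) :=
        sum_pow_le_of_subset_union_biUnion hsub hx hle k
    _ ≤ siftedPowSum k P x + x ^ k * ∑ p ∈ P, 3 * x / a := by
        gcongr with p hp
        refine (card_filter_dvd_and_isCyclicNum_le (hP p hp) ha (haP p hp)).trans ?_
        gcongr
        exact Nat.floor_le hx
    _ = siftedPowSum k P x + 3 * x ^ (k + 1) / a * #P := by
        rw [sum_const, nsmul_eq_mul]
        ring

/-- The positive integers up to `N` that are divisible by `r ^ 2` or by `r * q` for some prime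
`q ≡ 1 (mod r)`; when `r` is prime, these are the integers kept from being cyclic by `r`. -/
def obstructed (r N : ℕ) : Finset ℕ :=
  {n ∈ Ioc 0 N | r ^ 2 ∣ n} ∪ (primesModEqOne r N).biUnion fun q ↦ {n ∈ Ioc 0 N | r * q ∣ n}

lemma card_filter_dvd_le (N d : ℕ) : (#{n ∈ Ioc 0 N | d ∣ n} : ℝ) ≤ N / d := by
  rw [Nat.Ioc_filter_dvd_card_eq_div]
  exact Nat.cast_div_le

lemma card_obstructed_le (r N : ℕ) :
    (#(obstructed r N) : ℝ) ≤ N / r ^ 2 + N / r * recipSumModEqOne r N := by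
  calc (#(obstructed r N) : ℝ)
      ≤ #{n ∈ Ioc 0 N | r ^ 2 ∣ n} +
          ∑ q ∈ primesModEqOne r N, (#{n ∈ Ioc 0 N | r * q ∣ n} : ℝ) := by
        exact_mod_cast (card_union_le _ _).trans (Nat.add_le_add_left card_biUnion_le _)
    _ ≤ N / (r ^ 2 : ℕ) + ∑ q ∈ primesModEqOne r N, (N / (r * q : ℕ) : ℝ) := by
        gcongr <;> exact card_filter_dvd_le _ _
    _ = N / r ^ 2 + N / r * recipSumModEqOne r N := by
        rw [recipSumModEqOne, mul_sum]
        push_cast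
        simp only [div_eq_mul_inv, mul_inv, mul_assoc]

lemma sifted_subset_union_obstructed (w N : ℕ) : sifted w.primesLE N ⊆
    {n ∈ range (N + 1) | IsCyclicNum n} ∪ {r ∈ Ioc w N | r.Prime}.biUnion (obstructed · N) := by
  intro n hn
  obtain ⟨⟨hn_pos, hnN⟩, hsift⟩ := mem_sifted.mp hn
  by_cases hcyc : IsCyclicNum n
  · exact mem_union_left _ (mem_filter.mpr ⟨mem_range_succ_iff.mpr hnN, hcyc⟩)
  obtain ⟨r, hr, hrn⟩ := exists_prime_sq_dvd_or_mul_dvd_of_not_isCyclicNum hn_pos hcyc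
  have hle {d : ℕ} (hd : d ∣ n) : d ≤ N := (Nat.le_of_dvd hn_pos hd).trans hnN
  have hr_dvd : r ∣ n := by
    rcases hrn with hsq | ⟨q, _, _, hrq⟩
    exacts [dvd_of_mul_right_dvd (sq r ▸ hsq), dvd_of_mul_right_dvd hrq]
  have hwr : w < r := by
    by_contra! hrw
    exact hsift r (Nat.mem_primesLE.mpr ⟨hrw, hr⟩) hr_dvd
  refine mem_union_right _ (mem_biUnion.mpr
    ⟨r, mem_filter.mpr ⟨mem_Ioc.mpr ⟨hwr, hle hr_dvd⟩, hr⟩, mem_union.mpr (hrn.imp ?_ ?_)⟩)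
  · exact fun hsq ↦ mem_filter.mpr ⟨mem_Ioc.mpr ⟨hn_pos, hnN⟩, hsq⟩
  · rintro ⟨q, hq, hqr, hrq⟩
    exact mem_biUnion.mpr ⟨q, mem_primesModEqOne.mpr ⟨⟨hle (dvd_of_mul_left_dvd hrq), hq⟩, hqr⟩,
      mem_filter.mpr ⟨mem_Ioc.mpr ⟨hn_pos, hnN⟩, hrq⟩⟩

lemma log_div_sq_le {x : ℝ} (hx : 1 ≤ x) :
    log (x + 1) / (x + 1) ^ 2 ≤ (log x + 2) / x - (log (x + 1) + 2) / (x + 1) := by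
  have hx_pos : 0 < x := by linarith
  have hlog_sub : log (x + 1) - log x ≤ 1 / x := by
    rw [← log_div (by positivity) hx_pos.ne']
    refine (log_le_sub_one_of_pos (by positivity)).trans_eq ?_
    field_simp
    ring
  have hmul : (x + 1) * (log (x + 1) - log x) ≤ 2 :=
    calc (x + 1) * (log (x + 1) - log x) ≤ (x + 1) * (1 / x) := by gcongr
      _ = 1 + 1 / x := by field_simp
      _ ≤ 2 := by linarith [(div_le_one hx_pos).mpr hx]
  calc log (x + 1) / (x + 1) ^ 2 ≤ log (x + 1) / (x * (x + 1)) := by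
        have := log_nonneg (by linarith : 1 ≤ x + 1)
        gcongr
        nlinarith
    _ ≤ (log (x + 1) + (2 - (x + 1) * (log (x + 1) - log x))) / (x * (x + 1)) := by
        gcongr
        linarith
    _ = (log x + 2) / x - (log (x + 1) + 2) / (x + 1) := by
        field_simp
        ring

lemma sum_Ioc_log_div_sq_le {w : ℕ} (hw : w ≠ 0) (N : ℕ) :
    ∑ r ∈ Ioc w N, log r / (r : ℝ) ^ 2 ≤ (log w + 2) / w := by
  rcases le_total N w with hNw | hwN
  · rw [Ioc_eq_empty_of_le hNw, sum_empty]
    positivity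
  have htelescope : ∑ r ∈ Ioc w N, log r / (r : ℝ) ^ 2 ≤
      (log w + 2) / w - (log N + 2) / N := by
    induction N, hwN using Nat.le_induction with
    | base => simp
    | succ n hn ih =>
      rw [sum_Ioc_succ_top hn, Nat.cast_succ]
      have := log_div_sq_le (x := n) (mod_cast (by lia : 1 ≤ n))
      linarith
  exact htelescope.trans (sub_le_self _ (by positivity))

lemma sum_card_obstructed_le {w : ℕ} (hw : w ≠ 0) {N : ℕ} (hN : exp 1 ≤ N) :
    ∑ r ∈ Ioc w N with r.Prime, (#(obstructed r N) : ℝ) ≤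
      N * (102 * (log (log N) + 1) * ((log w + 2) / w)) := by
  have hlog : 1 ≤ log N := (le_log_iff_exp_le ((exp_pos 1).trans_le hN)).mpr hN
  have hloglog : 0 ≤ log (log N) := log_nonneg hlog
  have hterm (r : ℕ) (hr : r.Prime) :
      (#(obstructed r N) : ℝ) ≤ N * (102 * (log (log N) + 1)) * (log r / (r : ℝ) ^ 2) := by
    have hlog_r : 1 ≤ 2 * log r := by
      linarith [log_le_log two_pos (mod_cast hr.two_le : (2 : ℝ) ≤ r), log_two_gt_d9]
    have hr_pos : (0 : ℝ) < r := mod_cast hr.pos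
    calc (#(obstructed r N) : ℝ)
        ≤ N / r ^ 2 + N / r * recipSumModEqOne r N := card_obstructed_le r N
      _ ≤ N / r ^ 2 * ((2 * log r) * (log (log N) + 1)) +
            N / r * (100 * (log r / r) * (log (log N) + 1)) := by
          gcongr
          · exact le_mul_of_one_le_right (by positivity) (by nlinarith)
          · exact recipSumModEqOne_le hr hN
      _ = N * (102 * (log (log N) + 1)) * (log r / (r : ℝ) ^ 2) := by
          field_simp
          ring
  calc ∑ r ∈ Ioc w N with r.Prime, (#(obstructed r N) : ℝ)
      ≤ ∑ r ∈ Ioc w N with r.Prime, N * (102 * (log (log N) + 1)) * (log r / (r : ℝ) ^ 2) :=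
        sum_le_sum fun r hr ↦ hterm r (mem_filter.mp hr).2
    _ ≤ ∑ r ∈ Ioc w N, N * (102 * (log (log N) + 1)) * (log r / (r : ℝ) ^ 2) :=
        sum_le_sum_of_subset_of_nonneg (filter_subset _ _) fun _ _ _ ↦ by positivity
    _ = N * (102 * (log (log N) + 1)) * ∑ r ∈ Ioc w N, log r / (r : ℝ) ^ 2 := by rw [mul_sum]
    _ ≤ N * (102 * (log (log N) + 1)) * ((log w + 2) / w) := by
        gcongr
        exact sum_Ioc_log_div_sq_le hw N
    _ = N * (102 * (log (log N) + 1) * ((log w + 2) / w)) := by ring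

theorem siftedPowSum_sub_le_cyclicPowSum (k : ℕ) {w : ℕ} (hw : w ≠ 0) {x : ℝ} (hx : 3 ≤ x) :
    siftedPowSum k w.primesLE x - x ^ (k + 1) * (102 * (log (log x) + 1) * ((log w + 2) / w)) ≤
      cyclicPowSum k x := by
  have hx_nonneg : 0 ≤ x := by linarith
  have hfloor : (⌊x⌋₊ : ℝ) ≤ x := Nat.floor_le hx_nonneg
  have hexp : exp 1 ≤ ⌊x⌋₊ :=
    calc exp 1 ≤ (3 : ℕ) := exp_one_lt_three.le
      _ ≤ ⌊x⌋₊ := mod_cast Nat.le_floor hx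
  have hfloor_pos : (0 : ℝ) < ⌊x⌋₊ := (exp_pos 1).trans_le hexp
  have hlog : 1 ≤ log ⌊x⌋₊ := (le_log_iff_exp_le hfloor_pos).mpr hexp
  have hloglog : 0 ≤ log (log ⌊x⌋₊) := log_nonneg hlog
  have hle (n : ℕ) (hn : n ∈ sifted w.primesLE ⌊x⌋₊) : (n : ℝ) ≤ x :=
    (Nat.le_floor_iff hx_nonneg).mp (mem_sifted.mp hn).1.2
  rw [sub_le_iff_le_add]
  calc siftedPowSum k w.primesLE x
      ≤ cyclicPowSum k x + x ^ k * ∑ r ∈ Ioc w ⌊x⌋₊ with r.Prime, (#(obstructed r ⌊x⌋₊) : ℝ) :=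
        sum_pow_le_of_subset_union_biUnion (sifted_subset_union_obstructed w ⌊x⌋₊) hx_nonneg hle k
    _ ≤ cyclicPowSum k x + x ^ k * (⌊x⌋₊ * (102 * (log (log ⌊x⌋₊) + 1) * ((log w + 2) / w))) := by
        gcongr
        exact sum_card_obstructed_le hw hexp
    _ ≤ cyclicPowSum k x + x ^ k * (x * (102 * (log (log x) + 1) * ((log w + 2) / w))) := by
        gcongr
    _ = cyclicPowSum k x + x ^ (k + 1) * (102 * (log (log x) + 1) * ((log w + 2) / w)) := by ring

/-! ### Asymptotics -/

lemma tendsto_log_log_atTop : Tendsto (fun x ↦ log (log x)) atTop atTop :=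
  tendsto_log_atTop.comp tendsto_log_atTop

lemma tendsto_log_log_log_atTop : Tendsto (fun x ↦ log (log (log x))) atTop atTop :=
  tendsto_log_atTop.comp tendsto_log_log_atTop

/-- The sieving limit `log log x * (log log log x) ^ m`. Cyclic numbers up to `x` are compared from
above with the integers free of primes up to `sieveLevel (-2) x`, and from below with those free of
primes up to `sieveLevel 3 x`. -/
noncomputable def sieveLevel (m : ℤ) (x : ℝ) : ℝ := log (log x) * log (log (log x)) ^ m

lemma eventually_sieveLevel_pos (m : ℤ) : ∀ᶠ x in atTop, 0 < sieveLevel m x := by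
  filter_upwards [tendsto_log_log_atTop.eventually_gt_atTop 0,
    tendsto_log_log_log_atTop.eventually_gt_atTop 0] with x hlog₂ hlog₃
  exact mul_pos hlog₂ (zpow_pos hlog₃ m)

lemma tendsto_log_sieveLevel_div (m : ℤ) :
    Tendsto (fun x ↦ log (sieveLevel m x) / log (log (log x))) atTop (𝓝 1) := by
  have hlog_div : Tendsto (fun u : ℝ ↦ log u / u) atTop (𝓝 0) :=
    isLittleO_log_id_atTop.tendsto_div_nhds_zero
  have hlim : Tendsto (fun u : ℝ ↦ 1 + m * (log u / u)) atTop (𝓝 1) := by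
    simpa using (hlog_div.const_mul (m : ℝ)).const_add 1
  refine (hlim.comp tendsto_log_log_log_atTop).congr' ?_
  filter_upwards [tendsto_log_log_atTop.eventually_gt_atTop 0,
    tendsto_log_log_log_atTop.eventually_gt_atTop 0] with x hlog₂ hlog₃
  rw [sieveLevel, log_mul hlog₂.ne' (zpow_pos hlog₃ m).ne', log_zpow, add_div,
    div_self hlog₃.ne', mul_div_assoc, Function.comp_apply]

lemma tendsto_sieveLevel (m : ℤ) : Tendsto (sieveLevel m) atTop atTop := by
  have hlog : Tendsto (fun x ↦ log (sieveLevel m x)) atTop atTop := by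
    refine ((tendsto_log_sieveLevel_div m).pos_mul_atTop one_pos
      tendsto_log_log_log_atTop).congr' ?_
    filter_upwards [tendsto_log_log_log_atTop.eventually_gt_atTop 0] with x hlog₃
    exact div_mul_cancel₀ _ hlog₃.ne'
  refine tendsto_atTop_mono' _ ?_ hlog
  filter_upwards [eventually_sieveLevel_pos m] with x hz
  exact log_le_self hz.le

lemma eventually_log_sieveLevel_le (m : ℤ) :
    ∀ᶠ x in atTop, log (sieveLevel m x) ≤ 2 * log (log (log x)) := by
  filter_upwards [(tendsto_log_sieveLevel_div m).eventually_le_const one_lt_two,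
    tendsto_log_log_log_atTop.eventually_gt_atTop 0] with x hdiv hlog₃
  exact (div_le_iff₀ hlog₃).mp hdiv

lemma tendsto_log_log_log_mul_mertensProduct (m : ℤ) :
    Tendsto (fun x ↦ log (log (log x)) * mertensProduct (sieveLevel m x)) atTop
      (𝓝 (exp (-eulerMascheroniConstant))) := by
  have hlim := (tendsto_mertensProduct_mul_log.comp (tendsto_sieveLevel m)).div
    (tendsto_log_sieveLevel_div m) one_ne_zero
  rw [div_one] at hlim
  refine hlim.congr' ?_
  filter_upwards [tendsto_log_log_log_atTop.eventually_gt_atTop 0,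
    (tendsto_sieveLevel m).eventually_gt_atTop 1] with x hlog₃ hz
  have hlog_pos := log_pos hz
  simp only [Pi.div_apply, Function.comp_apply]
  field_simp

lemma tendsto_log_log_log_mul_exp_sieveLevel_div (m : ℤ) :
    Tendsto (fun x ↦ log (log (log x)) * exp (sieveLevel m x) / x) atTop (𝓝 0) := by
  have hbound : Tendsto (fun x ↦ exp (-log (log x))) atTop (𝓝 0) :=
    tendsto_exp_neg_atTop_nhds_zero.comp tendsto_log_log_atTop
  refine squeeze_zero' ?_ ?_ hbound
  · filter_upwards [tendsto_log_log_log_atTop.eventually_ge_atTop 0, eventually_ge_atTop 0]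
      with x hlog₃ hx
    positivity
  · filter_upwards [eventually_log_sieveLevel_le m, eventually_sieveLevel_pos m,
      tendsto_log_log_atTop.eventually (eventually_mul_pow_le_exp 3 2),
      tendsto_log_log_atTop.eventually_ge_atTop 1, tendsto_log_atTop.eventually_gt_atTop 0,
      eventually_gt_atTop 0] with x hlog_z hz_pos hsq hlog₂ hlog hx
    have hz : sieveLevel m x ≤ log (log x) ^ 2 := by
      rw [← log_le_log_iff hz_pos (by positivity), log_pow]
      exact_mod_cast hlog_z
    rw [exp_log hlog] at hsq
    calc log (log (log x)) * exp (sieveLevel m x) / x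
        ≤ exp (log (log x)) * exp (log (log x) ^ 2) / exp (log x) := by
          rw [exp_log hx]
          gcongr
          exact (log_le_self (by linarith)).trans (by linarith [add_one_le_exp (log (log x))])
      _ = exp (log (log x) + log (log x) ^ 2 - log x) := by rw [exp_sub, exp_add]
      _ ≤ exp (-log (log x)) := by
          gcongr
          nlinarith

lemma card_primesLE_floor_le {z : ℝ} (hz : 0 ≤ z) : (#⌊z⌋₊.primesLE : ℝ) ≤ z := by
  have hsub : ⌊z⌋₊.primesLE ⊆ Ioc 0 ⌊z⌋₊ := fun p hp ↦
    mem_Ioc.mpr ⟨(Nat.mem_primesLE.mp hp).2.pos, (Nat.mem_primesLE.mp hp).1⟩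
  have hcard : #⌊z⌋₊.primesLE ≤ ⌊z⌋₊ := by simpa using card_le_card hsub
  exact (Nat.cast_le.mpr hcard).trans (Nat.floor_le hz)

lemma abs_siftedPowSum_primesLE_sub_le (k : ℕ) {x z : ℝ} (hx : 0 ≤ x) (hz : 0 ≤ z) :
    |siftedPowSum k ⌊z⌋₊.primesLE x - x ^ (k + 1) / (k + 1) * mertensProduct z| ≤
      exp z * x ^ k := by
  refine (abs_siftedPowSum_sub_le k (fun p hp ↦ (Nat.mem_primesLE.mp hp).2) hx).trans ?_
  gcongr
  calc (2 : ℝ) ^ #⌊z⌋₊.primesLE ≤ exp 1 ^ #⌊z⌋₊.primesLE := by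
        gcongr
        exact exp_one_gt_two.le
    _ = exp #⌊z⌋₊.primesLE := exp_one_pow _
    _ ≤ exp z := exp_le_exp.mpr (card_primesLE_floor_le hz)

theorem tendsto_siftedPowSum_sieveLevel (k : ℕ) (m : ℤ) :
    Tendsto (fun x ↦ siftedPowSum k ⌊sieveLevel m x⌋₊.primesLE x / x ^ (k + 1) *
      log (log (log x))) atTop (𝓝 (exp (-eulerMascheroniConstant) / (k + 1))) := by
  refine ((tendsto_log_log_log_mul_mertensProduct m).div_const ((k : ℝ) + 1)).congr_dist ?_
  refine squeeze_zero' (.of_forall fun _ ↦ dist_nonneg) ?_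
    (tendsto_log_log_log_mul_exp_sieveLevel_div m)
  filter_upwards [eventually_sieveLevel_pos m, tendsto_log_log_log_atTop.eventually_gt_atTop 0,
    eventually_gt_atTop 0] with x hz hlog₃ hx
  set S := siftedPowSum k ⌊sieveLevel m x⌋₊.primesLE x
  set V := mertensProduct (sieveLevel m x)
  have hsub : S / x ^ (k + 1) * log (log (log x)) - log (log (log x)) * V / (k + 1) =
      (S - x ^ (k + 1) / (k + 1) * V) * (log (log (log x)) / x ^ (k + 1)) := by field_simp
  rw [dist_comm, dist_eq, hsub, abs_mul, abs_of_pos (by positivity : 0 < _ / x ^ (k + 1))]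
  calc |S - x ^ (k + 1) / (k + 1) * V| * (log (log (log x)) / x ^ (k + 1))
      ≤ exp (sieveLevel m x) * x ^ k * (log (log (log x)) / x ^ (k + 1)) := by
        gcongr
        exact abs_siftedPowSum_primesLE_sub_le k hx.le hz.le
    _ = log (log (log x)) * exp (sieveLevel m x) / x := by
        rw [pow_succ]
        field_simp

lemma eventually_sqrt_le_floor_div :
    ∀ᶠ x : ℝ in atTop, ∀ p : ℕ, 0 < p → p ≤ log (log x) → √x ≤ (⌊x⌋₊ / p : ℕ) := by
  have hlog : ∀ᶠ x : ℝ in atTop, log x ≤ √x / 2 := by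
    filter_upwards [(isLittleO_log_rpow_atTop one_half_pos).bound one_half_pos] with x hx
    rw [← sqrt_eq_rpow, norm_of_nonneg (sqrt_nonneg x)] at hx
    linarith [le_norm_self (log x)]
  filter_upwards [hlog, tendsto_log_atTop.eventually_ge_atTop 1, eventually_ge_atTop 1]
    with x hlog_le hlog_one hx p hp hpx
  have hp_pos : (0 : ℝ) < p := mod_cast hp
  have hp_le : (p : ℝ) ≤ √x / 2 := by linarith [log_le_self (zero_le_one.trans hlog_one)]
  have hsqrt : 1 ≤ √x := one_le_sqrt.mpr hx
  have hdiv : √x + 1 ≤ x / p := by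
    rw [le_div_iff₀ hp_pos]
    calc (√x + 1) * p ≤ (√x + √x) * (√x / 2) := by gcongr
      _ = √x * √x := by ring
      _ = x := mul_self_sqrt (by linarith)
  have hfloor := Nat.lt_floor_add_one (x / p)
  rw [Nat.floor_div_natCast] at hfloor
  linarith

lemma half_log_log_le {x y : ℝ} (hx : 1 < x) (hlog₂ : 2 * log 2 ≤ log (log x)) (hy : √x ≤ y) :
    log (log x) / 2 ≤ log (log y) := by
  have hlog : 0 < log x := log_pos hx
  have hlog_y : log x / 2 ≤ log y := by
    rw [← log_sqrt (by linarith)]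
    exact log_le_log (by positivity) hy
  calc log (log x) / 2 ≤ log (log x) - log 2 := by linarith
    _ = log (log x / 2) := (log_div hlog.ne' two_ne_zero).symm
    _ ≤ log (log y) := log_le_log (by positivity) hlog_y

theorem eventually_div_le_recipSumModEqOne_floor_div :
    ∀ᶠ x : ℝ in atTop, ∀ p : ℕ, p.Prime → p ≤ sieveLevel (-2) x →
      log (log x) / 8 / p ≤ recipSumModEqOne p (⌊x⌋₊ / p) := by
  obtain ⟨C, hC, hrecip⟩ := exists_eventually_le_recipSumModEqOne
  obtain ⟨M₀, hrecip⟩ := eventually_atTop.mp hrecip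
  filter_upwards [eventually_sqrt_le_floor_div, tendsto_log_log_atTop.eventually_ge_atTop 2,
    tendsto_log_log_log_atTop.eventually_ge_atTop (8 * C + 2),
    tendsto_sqrt_atTop.eventually_ge_atTop (M₀ : ℝ), eventually_gt_atTop 1]
    with x hsqrt hlog₂ hlog₃ hM₀ hx p hp hpz
  set L := log (log x)
  set u := log L
  have hp_one : (1 : ℝ) ≤ p := mod_cast hp.one_le
  have hu : 2 ≤ u := by linarith
  have hpL : p * u ^ 2 ≤ L := by
    rwa [sieveLevel, zpow_neg, zpow_ofNat, ← div_eq_mul_inv, le_div_iff₀ (by positivity)] at hpz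
  have hp_le : (p : ℝ) ≤ L / 2 := by nlinarith [mul_le_mul hu hu zero_le_two (by linarith)]
  have hM := hsqrt p hp.pos (by linarith)
  have hloglog : L / 2 ≤ log (log (⌊x⌋₊ / p : ℕ)) :=
    half_log_log_le hx (by linarith [log_two_lt_d9]) hM
  have herror : C * log p * p ≤ L / 8 := by
    have hlog_p : log p ≤ u := log_le_log (by linarith) (by linarith)
    calc C * log p * p ≤ u / 8 * u * p := by
          gcongr
          linarith
      _ = p * u ^ 2 / 8 := by ring
      _ ≤ L / 8 := by gcongr
  calc L / 8 / p = (L / 2 / 2 - L / 8) / p := by ring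
    _ ≤ (log (log (⌊x⌋₊ / p : ℕ)) / 2 - C * log p * p) / p := by gcongr
    _ = log (log (⌊x⌋₊ / p : ℕ)) / (2 * p) - C * log p := by field_simp
    _ ≤ recipSumModEqOne p (⌊x⌋₊ / p) :=
        hrecip _ (mod_cast hM₀.trans hM) p hp (by linarith)

theorem eventually_cyclicPowSum_le (k : ℕ) : ∀ᶠ x in atTop, cyclicPowSum k x ≤
    siftedPowSum k ⌊sieveLevel (-2) x⌋₊.primesLE x +
      24 * x ^ (k + 1) / log (log (log x)) ^ 2 := by
  filter_upwards [eventually_div_le_recipSumModEqOne_floor_div, eventually_sieveLevel_pos (-2),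
    tendsto_log_log_atTop.eventually_gt_atTop 0, tendsto_log_log_log_atTop.eventually_gt_atTop 0,
    eventually_ge_atTop 0] with x hrecip hz hlog₂ hlog₃ hx
  have hprime (p : ℕ) (hp : p ∈ ⌊sieveLevel (-2) x⌋₊.primesLE) : p.Prime :=
    (Nat.mem_primesLE.mp hp).2
  refine (cyclicPowSum_le_siftedPowSum_add k hprime hx (by positivity) fun p hp ↦
    hrecip p (hprime p hp) ((Nat.le_floor_iff hz.le).mp (Nat.mem_primesLE.mp hp).1)).trans ?_
  gcongr
  calc 3 * x ^ (k + 1) / (log (log x) / 8) * #⌊sieveLevel (-2) x⌋₊.primesLE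
      ≤ 3 * x ^ (k + 1) / (log (log x) / 8) * sieveLevel (-2) x := by
        gcongr
        exact card_primesLE_floor_le hz.le
    _ = 24 * x ^ (k + 1) / log (log (log x)) ^ 2 := by
        rw [sieveLevel, zpow_neg, zpow_ofNat]
        field_simp
        ring

theorem eventually_le_cyclicPowSum (k : ℕ) : ∀ᶠ x in atTop,
    siftedPowSum k ⌊sieveLevel 3 x⌋₊.primesLE x - 1632 * x ^ (k + 1) / log (log (log x)) ^ 2 ≤
      cyclicPowSum k x := by
  filter_upwards [eventually_log_sieveLevel_le 3, (tendsto_sieveLevel 3).eventually_ge_atTop 2,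
    tendsto_log_log_atTop.eventually_ge_atTop 1, tendsto_log_log_log_atTop.eventually_ge_atTop 1,
    eventually_ge_atTop 3] with x hlog_z hz hlog₂ hlog₃ hx
  set z := sieveLevel 3 x with hz_def
  have hfloor_one : 1 ≤ ⌊z⌋₊ := Nat.le_floor (by push_cast; linarith)
  have hfloor_pos : (0 : ℝ) < ⌊z⌋₊ := mod_cast hfloor_one
  have hfloor : z / 2 ≤ ⌊z⌋₊ := by linarith [Nat.lt_floor_add_one z]
  have hlog_floor : log ⌊z⌋₊ ≤ log z := log_le_log hfloor_pos (Nat.floor_le (by linarith))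
  refine le_trans ?_ (siftedPowSum_sub_le_cyclicPowSum k (Nat.one_le_iff_ne_zero.mp hfloor_one) hx)
  gcongr
  calc x ^ (k + 1) * (102 * (log (log x) + 1) * ((log ⌊z⌋₊ + 2) / ⌊z⌋₊))
      ≤ x ^ (k + 1) * (102 * (2 * log (log x)) * (4 * log (log (log x)) / (z / 2))) := by
        gcongr <;> linarith
    _ = 1632 * x ^ (k + 1) / log (log (log x)) ^ 2 := by
        rw [hz_def, sieveLevel, zpow_ofNat]
        field_simp
        ring

theorem tendsto_cyclicPowSum_div_pow_mul_log (k : ℕ) :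
    Tendsto (fun x ↦ cyclicPowSum k x / x ^ (k + 1) * log (log (log x))) atTop
      (𝓝 (exp (-eulerMascheroniConstant) / (k + 1))) := by
  have herror (c : ℝ) : Tendsto (fun x ↦ c / log (log (log x))) atTop (𝓝 0) :=
    tendsto_const_nhds.div_atTop tendsto_log_log_log_atTop
  have hlower := (tendsto_siftedPowSum_sieveLevel k 3).sub (herror 1632)
  have hupper := (tendsto_siftedPowSum_sieveLevel k (-2)).add (herror 24)
  rw [sub_zero] at hlower
  rw [add_zero] at hupper
  refine tendsto_of_tendsto_of_tendsto_of_le_of_le' hlower hupper ?_ ?_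
  · filter_upwards [eventually_le_cyclicPowSum k,
      tendsto_log_log_log_atTop.eventually_gt_atTop 0, eventually_gt_atTop 0] with x hle hlog₃ hx
    calc siftedPowSum k ⌊sieveLevel 3 x⌋₊.primesLE x / x ^ (k + 1) * log (log (log x)) -
          1632 / log (log (log x))
        = (siftedPowSum k ⌊sieveLevel 3 x⌋₊.primesLE x -
            1632 * x ^ (k + 1) / log (log (log x)) ^ 2) / x ^ (k + 1) * log (log (log x)) := by
          field_simp
      _ ≤ cyclicPowSum k x / x ^ (k + 1) * log (log (log x)) := by gcongr
  · filter_upwards [eventually_cyclicPowSum_le k,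
      tendsto_log_log_log_atTop.eventually_gt_atTop 0, eventually_gt_atTop 0] with x hle hlog₃ hx
    calc cyclicPowSum k x / x ^ (k + 1) * log (log (log x))
        ≤ (siftedPowSum k ⌊sieveLevel (-2) x⌋₊.primesLE x +
            24 * x ^ (k + 1) / log (log (log x)) ^ 2) / x ^ (k + 1) * log (log (log x)) := by
          gcongr
      _ = siftedPowSum k ⌊sieveLevel (-2) x⌋₊.primesLE x / x ^ (k + 1) * log (log (log x)) +
            24 / log (log (log x)) := by
          field_simp

end CyclicNumber

theorem cyclicPowSum_isEquivalent_explicit (k : ℕ) (hk : 0 < k) :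
    (fun x : ℝ => cyclicPowSum k x) ~[atTop]
      (fun x : ℝ => x ^ (k + 1) /
        ((k + 1) * Real.exp Real.eulerMascheroniConstant *
          Real.log (Real.log (Real.log x)))) := by
  have hlim := (CyclicNumber.tendsto_cyclicPowSum_div_pow_mul_log k).mul_const
    ((k + 1) * exp eulerMascheroniConstant)
  have hone : exp (-eulerMascheroniConstant) / ((k : ℝ) + 1) *
      ((k + 1) * exp eulerMascheroniConstant) = 1 := by
    rw [exp_neg]
    field_simp
  rw [hone] at hlim
  refine isEquivalent_of_tendsto_one (hlim.congr' ?_)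
  filter_upwards [CyclicNumber.tendsto_log_log_log_atTop.eventually_gt_atTop 0,
    eventually_gt_atTop 0] with x hlog₃ hx
  rw [Pi.div_apply]
  field_simp
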